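/- arXiv:2311.17579 — 3 statements merged into one kernel-verified Lean document; each statement's English description precedes it below -/
import Mathlib

section
/- Let N ≥ 1 and 0 < q < 1. There exists γ* > 0 such that for every γ with 0 < γ < γ* the following comparison principle holds. Let u₀, v₀ : ℝ^N → ℝ be non-negative continuous functions vanishing at infinity with u₀ ≥ v₀ and u₀ not identically zero. Suppose u, v : ℝ^N × [0,∞) → ℝ are non-negative, for every t ≥ 0 the maps x ↦ u(x,t) and x ↦ v(x,t) are continuous and vanish at infinity, t ↦ u(·,t) and t ↦ v(·,t) are continuous into the bounded continuous functions with the sup norm, and for all t ≥ 0 and x ∈ ℝ^N: u(x,t) ≥ ∫_{ℝ^N} G_t(x−y) u₀(y) dy + ∫₀ᵗ ∫_{ℝ^N} G_{t−σ}(x−y) |y|^{−γ} u(y,σ)^q dy dσ and v(x,t) ≤ ∫_{ℝ^N} G_t(x−y) v₀(y) dy + ∫₀ᵗ ∫_{ℝ^N} G_{t−σ}(x−y) |y|^{−γ} v(y,σ)^q dy dσ. Then u(x,t) ≥ v(x,t) for all x ∈ ℝ^N and t ≥ 0. -/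
open MeasureTheory Filter Real

/-- The heat kernel `G_t(x) = (4πt)^{-N/2} exp(-|x|²/(4t))` on `ℝ^N`. -/
noncomputable def heatKernel (N : ℕ) (t : ℝ) (x : EuclideanSpace ℝ (Fin N)) : ℝ :=
  (4 * π * t) ^ (-(N : ℝ) / 2) * Real.exp (-‖x‖ ^ 2 / (4 * t))

/-- `w` belongs to `C([0,∞); C₀(ℝ^N))` and is non-negative: for every `t ≥ 0`
the map `x ↦ w(x,t)` is continuous and vanishes at infinity, and `t ↦ w(·,t)`
is continuous in the sup norm. -/
def IsAdmissible (N : ℕ) (w : EuclideanSpace ℝ (Fin N) → ℝ → ℝ) : Prop :=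
  (∀ x t, 0 ≤ t → 0 ≤ w x t) ∧
  (∀ t, 0 ≤ t → Continuous (fun x => w x t)) ∧
  (∀ t, 0 ≤ t → Tendsto (fun x => w x t)
    (cocompact (EuclideanSpace ℝ (Fin N))) (nhds 0)) ∧
  (∀ t₀, 0 ≤ t₀ → ∀ ε > (0 : ℝ), ∃ δ > (0 : ℝ), ∀ t, 0 ≤ t →
    |t - t₀| < δ → ∀ x, |w x t - w x t₀| ≤ ε)

/-!
Put `D(x, t) = t (√t + |x|)^{-γ}`, which is comparable to the Duhamel term of the constant source
`1`. Since `q < 1`, a supersolution with nonzero initial value is bounded below by a universal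
profile: it dominates `c D^{1/(1-q)}`, damped by a Gaussian of rate `k`, and inserting such a
minorant into the Duhamel term, with the time integral restricted to `(rt, t)` and `r³ = q`, gives
another one with constants `κ c ^ q` and `r k`. Iterating, `c` tends to `κ^{1/(1-q)}` and `k` to
`0`, so that `u ≥ κ^{1/(1-q)} D^{1/(1-q)}`, that is, the Duhamel term of `1` is at most `B u^{1-q}`.

If `v ≤ l (u + ε)` with `l ≥ 1`, then subadditivity of `s ↦ s ^ q` bounds `v` by `l ^ q` times `u`
plus the Duhamel term of the constant `ε ^ q`, hence by `(1 + B) l ^ q (u + ε)`. Iterating from any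
`l` and letting `ε → 0`, `v ≤ (1 + B)^{1/(1-q)} u`. For `ε = 0` the same step turns `l` into
`l ^ q`, and iterating once more gives `v ≤ u`.
-/

section HeatKernel

variable {N : ℕ} {t : ℝ}

lemma heatKernel_nonneg (ht : 0 ≤ t) (x : EuclideanSpace ℝ (Fin N)) : 0 ≤ heatKernel N t x := by
  unfold heatKernel; positivity

lemma integral_heatKernel_sub (ht : 0 < t) (x : EuclideanSpace ℝ (Fin N)) :
    ∫ y, heatKernel N t (x - y) = 1 := by
  have hform (y : EuclideanSpace ℝ (Fin N)) : heatKernel N t y =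
      (4 * π * t) ^ (-(N : ℝ) / 2) * Real.exp (-(1 / (4 * t)) * ‖y‖ ^ 2) := by
    unfold heatKernel; congr 2; ring
  have hscale : π / (1 / (4 * t)) = 4 * π * t := by field_simp
  rw [integral_sub_left_eq_self (heatKernel N t) volume x]
  simp_rw [hform]
  rw [integral_const_mul, GaussianFourier.integral_rexp_neg_mul_sq_norm (by positivity), hscale,
    ← Real.rpow_add (by positivity), finrank_euclideanSpace_fin, neg_div, neg_add_cancel,
    Real.rpow_zero]

lemma integrable_heatKernel_sub (ht : 0 < t) (x : EuclideanSpace ℝ (Fin N)) :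
    Integrable fun y => heatKernel N t (x - y) :=
  integrable_of_integral_eq_one (integral_heatKernel_sub ht x)

lemma rpow_neg_natCast_div_two (n : ℕ) {a : ℝ} (ha : 0 ≤ a) : a ^ (-(n : ℝ) / 2) = (√a ^ n)⁻¹ := by
  rw [Real.sqrt_eq_rpow, ← Real.rpow_natCast, ← Real.rpow_mul ha, ← Real.rpow_neg ha]
  ring_nf

lemma one_add_pow_mul_exp_neg_le (n : ℕ) {a : ℝ} (ha : 0 ≤ a) :
    (1 + a) ^ n * Real.exp (-(a ^ 2 / 4)) ≤ n.factorial * Real.exp 2 := by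
  have hpow : (1 + a) ^ n ≤ n.factorial * Real.exp (1 + a) := by
    have := Real.pow_div_factorial_le_exp (x := 1 + a) (by positivity) n
    rwa [div_le_iff₀' (by positivity)] at this
  calc (1 + a) ^ n * Real.exp (-(a ^ 2 / 4))
      ≤ n.factorial * Real.exp (1 + a) * Real.exp (-(a ^ 2 / 4)) := by gcongr
    _ = n.factorial * Real.exp (1 + a - a ^ 2 / 4) := by
        rw [mul_assoc, ← Real.exp_add, ← sub_eq_add_neg]
    _ ≤ n.factorial * Real.exp 2 := by gcongr; nlinarith [sq_nonneg (a - 2)]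

lemma heatKernel_le (ht : 0 < t) (x : EuclideanSpace ℝ (Fin N)) :
    heatKernel N t x ≤ N.factorial * Real.exp 2 * ((√t + ‖x‖) ^ N)⁻¹ := by
  have : 0 < √t := Real.sqrt_pos.2 ht
  have hexp : -‖x‖ ^ 2 / (4 * t) = -((‖x‖ / √t) ^ 2 / 4) := by
    rw [div_pow, Real.sq_sqrt ht.le]; field_simp
  have hsum : √t + ‖x‖ = √t * (1 + ‖x‖ / √t) := by field_simp
  have hprefactor : (4 * π * t) ^ (-(N : ℝ) / 2) ≤ (√t ^ N)⁻¹ := by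
    rw [rpow_neg_natCast_div_two N (by positivity)]
    gcongr
    nlinarith [Real.pi_gt_three]
  rw [heatKernel, hexp, hsum, mul_pow, mul_inv]
  calc (4 * π * t) ^ (-(N : ℝ) / 2) * Real.exp (-((‖x‖ / √t) ^ 2 / 4))
      ≤ (√t ^ N)⁻¹ * Real.exp (-((‖x‖ / √t) ^ 2 / 4)) := by gcongr
    _ = ((1 + ‖x‖ / √t) ^ N * Real.exp (-((‖x‖ / √t) ^ 2 / 4))) *
          ((√t ^ N)⁻¹ * ((1 + ‖x‖ / √t) ^ N)⁻¹) := by field_simp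
    _ ≤ _ := mul_le_mul_of_nonneg_right (one_add_pow_mul_exp_neg_le N (by positivity))
        (by positivity)

lemma le_heatKernel_of_norm_le_sqrt (ht : 0 < t) {x : EuclideanSpace ℝ (Fin N)}
    (hx : ‖x‖ ≤ √t) :
    (4 * π) ^ (-(N : ℝ) / 2) * Real.exp (-(1 / 4)) * (√t ^ N)⁻¹ ≤ heatKernel N t x := by
  have hexp : -(1 / 4) ≤ -‖x‖ ^ 2 / (4 * t) := by
    rw [le_div_iff₀ (by positivity)]
    linarith [(Real.le_sqrt (norm_nonneg x) ht.le).1 hx]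
  rw [heatKernel, Real.mul_rpow (by positivity) ht.le, rpow_neg_natCast_div_two N ht.le,
    mul_right_comm]
  gcongr

lemma integrableOn_ball_norm_rpow_neg {γ : ℝ} (hγ0 : 0 ≤ γ) (hγN : γ < N) (r : ℝ) :
    IntegrableOn (fun y : EuclideanSpace ℝ (Fin N) => ‖y‖ ^ (-γ)) (Metric.ball 0 r) := by
  refine integrableOn_ball_of_norm_le_rpow (C := 1) (α := γ) ?_ ?_ ?_ ?_
  · rw [finrank_euclideanSpace_fin]; exact_mod_cast hγ0.trans_lt hγN
  · rwa [finrank_euclideanSpace_fin]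
  · refine Eventually.of_forall fun x => ?_
    rw [one_mul, Real.norm_of_nonneg (by positivity)]
  · exact Measurable.aestronglyMeasurable (by fun_prop)

lemma setIntegral_ball_norm_rpow_neg (γ : ℝ) {r : ℝ} (hr : 0 < r) :
    ∫ y in Metric.ball (0 : EuclideanSpace ℝ (Fin N)) r, ‖y‖ ^ (-γ) =
      r ^ N * r ^ (-γ) * ∫ y in Metric.ball (0 : EuclideanSpace ℝ (Fin N)) 1, ‖y‖ ^ (-γ) := by
  have h := Measure.setIntegral_comp_smul_of_pos volume
    (fun y : EuclideanSpace ℝ (Fin N) => ‖y‖ ^ (-γ)) (Metric.ball 0 1) hr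
  rw [smul_ball hr.ne', smul_zero, finrank_euclideanSpace_fin, Real.norm_of_nonneg hr.le,
    mul_one] at h
  simp_rw [norm_smul, Real.norm_of_nonneg hr.le, Real.mul_rpow hr.le (norm_nonneg _)] at h
  rw [integral_const_mul, smul_eq_mul] at h
  rw [mul_assoc, h]
  field_simp

-- Outside the ball of radius `r` the weight is at most `r ^ (-γ)`; inside it, `√t + ‖x - y‖ ≥ r`.
lemma heatKernel_mul_norm_rpow_neg_le {γ r : ℝ} (hγ : 0 ≤ γ) (ht : 0 < t) (hr : 0 < r)
    {x : EuclideanSpace ℝ (Fin N)} (hx : 2 * r ≤ √t + ‖x‖) (y : EuclideanSpace ℝ (Fin N)) :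
    heatKernel N t (x - y) * ‖y‖ ^ (-γ) ≤
      r ^ (-γ) * heatKernel N t (x - y) +
        N.factorial * Real.exp 2 * (r ^ N)⁻¹ *
          (Metric.ball 0 r).indicator (fun y => ‖y‖ ^ (-γ)) y := by
  have hG := heatKernel_nonneg ht.le (x - y)
  by_cases hy : y ∈ Metric.ball (0 : EuclideanSpace ℝ (Fin N)) r
  · rw [Set.indicator_of_mem hy]
    rw [mem_ball_zero_iff] at hy
    have hdist : r ≤ √t + ‖x - y‖ := by linarith [norm_sub_norm_le x y]
    have hker : heatKernel N t (x - y) ≤ N.factorial * Real.exp 2 * (r ^ N)⁻¹ :=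
      (heatKernel_le ht (x - y)).trans (by gcongr)
    exact le_add_of_nonneg_of_le (by positivity) (by gcongr)
  · rw [Set.indicator_of_notMem hy, mul_zero, add_zero, mul_comm]
    rw [mem_ball_zero_iff, not_lt] at hy
    gcongr ?_ * _
    exact Real.rpow_le_rpow_of_nonpos hr hy (neg_nonpos.2 hγ)

lemma integrable_heatKernel_mul_norm_rpow_neg {γ : ℝ} (hγ0 : 0 ≤ γ) (hγN : γ < N) (ht : 0 < t)
    (x : EuclideanSpace ℝ (Fin N)) :
    Integrable fun y => heatKernel N t (x - y) * ‖y‖ ^ (-γ) := by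
  obtain ⟨r, hr⟩ : ∃ r, 2 * r = √t + ‖x‖ := ⟨(√t + ‖x‖) / 2, by ring⟩
  have hr0 : 0 < r := by linarith [Real.sqrt_pos.2 ht, norm_nonneg x]
  have hker := (integrable_heatKernel_sub ht x).const_mul (r ^ (-γ))
  have hball := ((integrable_indicator_iff measurableSet_ball).2
    (integrableOn_ball_norm_rpow_neg hγ0 hγN r)).const_mul (N.factorial * Real.exp 2 * (r ^ N)⁻¹)
  have hmeas : Measurable fun y => heatKernel N t (x - y) * ‖y‖ ^ (-γ) := by
    unfold heatKernel; fun_prop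
  refine (hker.add hball).mono' hmeas.aestronglyMeasurable (Eventually.of_forall fun y => ?_)
  have hG := heatKernel_nonneg ht.le (x - y)
  rw [Real.norm_of_nonneg (by positivity)]
  exact heatKernel_mul_norm_rpow_neg_le hγ0 ht hr0 hr.le y

end HeatKernel

section HeatFlow

/-- The heat semigroup: `heatFlow N t f` is the solution at time `t > 0` of the heat equation with
initial value `f`. -/
noncomputable def heatFlow (N : ℕ) (t : ℝ) (f : EuclideanSpace ℝ (Fin N) → ℝ)
    (x : EuclideanSpace ℝ (Fin N)) : ℝ :=
  ∫ y, heatKernel N t (x - y) * f y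

variable {N : ℕ} {t : ℝ} {f g : EuclideanSpace ℝ (Fin N) → ℝ} {x : EuclideanSpace ℝ (Fin N)}

lemma heatFlow_nonneg (ht : 0 ≤ t) (hf : 0 ≤ᵐ[volume] f) : 0 ≤ heatFlow N t f x :=
  integral_nonneg_of_ae <| by
    filter_upwards [hf] with y hy using mul_nonneg (heatKernel_nonneg ht _) hy

lemma heatFlow_mono (ht : 0 ≤ t) (hf : Integrable fun y => heatKernel N t (x - y) * f y)
    (hg : Integrable fun y => heatKernel N t (x - y) * g y) (hfg : f ≤ᵐ[volume] g) :
    heatFlow N t f x ≤ heatFlow N t g x :=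
  integral_mono_ae hf hg <| by
    filter_upwards [hfg] with y hy using mul_le_mul_of_nonneg_left hy (heatKernel_nonneg ht _)

lemma heatFlow_const_mul (a : ℝ) (f : EuclideanSpace ℝ (Fin N) → ℝ) :
    heatFlow N t (fun y => a * f y) x = a * heatFlow N t f x := by
  simp only [heatFlow, mul_left_comm _ a, integral_const_mul]

lemma integrable_heatKernel_mul (ht : 0 < t) (hf : MemLp f ⊤) (x : EuclideanSpace ℝ (Fin N)) :
    Integrable fun y => heatKernel N t (x - y) * f y :=
  (integrable_heatKernel_sub ht x).mul_of_top_left hf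

lemma exists_heatFlow_norm_rpow_neg_le {γ : ℝ} (hγ0 : 0 ≤ γ) (hγN : γ < N) :
    ∃ C, 0 < C ∧ ∀ t, 0 < t → ∀ x : EuclideanSpace ℝ (Fin N),
      heatFlow N t (fun y => ‖y‖ ^ (-γ)) x ≤ C * (√t + ‖x‖) ^ (-γ) := by
  let I := ∫ y in Metric.ball (0 : EuclideanSpace ℝ (Fin N)) 1, ‖y‖ ^ (-γ)
  have : 0 ≤ I := integral_nonneg fun y => by positivity
  refine ⟨(1 + N.factorial * Real.exp 2 * I) * (1 / 2 : ℝ) ^ (-γ), by positivity,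
    fun t ht x => ?_⟩
  obtain ⟨r, hr⟩ : ∃ r, r = 1 / 2 * (√t + ‖x‖) := ⟨_, rfl⟩
  have hr0 : 0 < r := by have := Real.sqrt_pos.2 ht; rw [hr]; positivity
  have hker := (integrable_heatKernel_sub ht x).const_mul (r ^ (-γ))
  have hball := ((integrable_indicator_iff measurableSet_ball).2
    (integrableOn_ball_norm_rpow_neg hγ0 hγN r)).const_mul (N.factorial * Real.exp 2 * (r ^ N)⁻¹)
  calc heatFlow N t (fun y => ‖y‖ ^ (-γ)) x
      ≤ ∫ y, (r ^ (-γ) * heatKernel N t (x - y) + N.factorial * Real.exp 2 * (r ^ N)⁻¹ *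
          (Metric.ball 0 r).indicator (fun y => ‖y‖ ^ (-γ)) y) :=
        integral_mono (integrable_heatKernel_mul_norm_rpow_neg hγ0 hγN ht x) (hker.add hball)
          (heatKernel_mul_norm_rpow_neg_le hγ0 ht hr0 (by linarith))
    _ = (1 + N.factorial * Real.exp 2 * I) * r ^ (-γ) := by
        rw [integral_add hker hball, integral_const_mul, integral_const_mul,
          integral_heatKernel_sub ht, integral_indicator measurableSet_ball,
          setIntegral_ball_norm_rpow_neg γ hr0]
        field_simp
        ring
    _ = _ := by rw [hr, Real.mul_rpow (by norm_num) (by positivity), ← mul_assoc]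

lemma abs_heatFlow_norm_rpow_neg_mul_le {γ M : ℝ} (hγ0 : 0 ≤ γ) (hγN : γ < N) (ht : 0 < t)
    (hf : ∀ y, |f y| ≤ M) (x : EuclideanSpace ℝ (Fin N)) :
    |heatFlow N t (fun y => ‖y‖ ^ (-γ) * f y) x| ≤ M * heatFlow N t (fun y => ‖y‖ ^ (-γ)) x := by
  rw [heatFlow, heatFlow, ← integral_const_mul, ← Real.norm_eq_abs]
  refine norm_integral_le_of_norm_le
    ((integrable_heatKernel_mul_norm_rpow_neg hγ0 hγN ht x).const_mul M)
    (Eventually.of_forall fun y => ?_)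
  have hG := heatKernel_nonneg ht.le (x - y)
  rw [← mul_assoc, norm_mul, Real.norm_of_nonneg (by positivity), mul_comm]
  exact mul_le_mul_of_nonneg_right (hf y) (by positivity)

/-- A lower bound, valid for all `t > 0`, of the mass that the heat kernel at time `t` puts on the
ball of radius `√t`. -/
noncomputable def heatBallMass (N : ℕ) : ℝ :=
  (4 * π) ^ (-(N : ℝ) / 2) * Real.exp (-(1 / 4)) *
    volume.real (Metric.ball (0 : EuclideanSpace ℝ (Fin N)) 1)

lemma heatBallMass_pos (N : ℕ) : 0 < heatBallMass N := by
  have : 0 < volume.real (Metric.ball (0 : EuclideanSpace ℝ (Fin N)) 1) :=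
    ENNReal.toReal_pos (Metric.measure_ball_pos _ _ one_pos).ne' measure_ball_lt_top.ne
  unfold heatBallMass; positivity

lemma heatBallMass_mul_le_heatFlow (ht : 0 < t)
    (hint : Integrable fun y => heatKernel N t (x - y) * f y) (hf : 0 ≤ᵐ[volume] f) {m : ℝ}
    (hm : 0 ≤ m) (hmf : ∀ᵐ y, ‖y - x‖ ≤ √t → m ≤ f y) :
    heatBallMass N * m ≤ heatFlow N t f x := by
  have hs := Real.sqrt_pos.2 ht
  obtain ⟨k, hk⟩ : ∃ k, k = (4 * π) ^ (-(N : ℝ) / 2) * Real.exp (-(1 / 4)) := ⟨_, rfl⟩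
  have : 0 ≤ k := by rw [hk]; positivity
  have hvol : volume.real (Metric.ball x √t) =
      √t ^ N * volume.real (Metric.ball (0 : EuclideanSpace ℝ (Fin N)) 1) := by
    rw [measureReal_def, Measure.addHaar_ball_of_pos _ _ hs, ENNReal.toReal_mul,
      ENNReal.toReal_ofReal (by positivity), finrank_euclideanSpace_fin, measureReal_def]
  calc heatBallMass N * m = ∫ _ in Metric.ball x √t, k * (√t ^ N)⁻¹ * m := by
        rw [setIntegral_const, smul_eq_mul, hvol, heatBallMass, ← hk]; field_simp
    _ ≤ ∫ y in Metric.ball x √t, heatKernel N t (x - y) * f y := by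
        refine setIntegral_mono_on_ae (integrableOn_const measure_ball_lt_top.ne)
          hint.integrableOn measurableSet_ball ?_
        filter_upwards [hmf] with y hy hyx
        rw [mem_ball_iff_norm] at hyx
        have hker := le_heatKernel_of_norm_le_sqrt ht ((norm_sub_rev x y).trans_le hyx.le)
        rw [← hk] at hker
        exact mul_le_mul hker (hy hyx.le) hm (heatKernel_nonneg ht.le _)
    _ ≤ heatFlow N t f x := by
        refine setIntegral_le_integral hint ?_
        filter_upwards [hf] with y hy using mul_nonneg (heatKernel_nonneg ht.le _) hy

end HeatFlow

section BoundedSource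

/-- Sources that are measurable and bounded on the space-time slab over `(0, T]`. Nothing is asked
of `g` at other times. -/
structure IsBoundedSource {N : ℕ} (T : ℝ) (g : EuclideanSpace ℝ (Fin N) → ℝ → ℝ) : Prop where
  measurable : Measurable fun p : Set.Ioc 0 T × EuclideanSpace ℝ (Fin N) => g p.2 p.1
  bounded : ∃ M, ∀ y, ∀ σ ∈ Set.Ioc 0 T, |g y σ| ≤ M

namespace IsBoundedSource

variable {N : ℕ} {T : ℝ} {g g₁ g₂ : EuclideanSpace ℝ (Fin N) → ℝ → ℝ}

lemma const (T a : ℝ) : IsBoundedSource (N := N) T fun _ _ => a :=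
  ⟨measurable_const, |a|, fun _ _ _ => le_rfl⟩

lemma add (h₁ : IsBoundedSource T g₁) (h₂ : IsBoundedSource T g₂) :
    IsBoundedSource T fun y σ => g₁ y σ + g₂ y σ := by
  obtain ⟨M₁, hM₁⟩ := h₁.bounded
  obtain ⟨M₂, hM₂⟩ := h₂.bounded
  exact ⟨h₁.measurable.add h₂.measurable, M₁ + M₂, fun y σ hσ =>
    (abs_add_le _ _).trans (add_le_add (hM₁ y σ hσ) (hM₂ y σ hσ))⟩

lemma const_mul (a : ℝ) (h : IsBoundedSource T g) : IsBoundedSource T fun y σ => a * g y σ := by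
  obtain ⟨M, hM⟩ := h.bounded
  refine ⟨h.measurable.const_mul a, |a| * M, fun y σ hσ => ?_⟩
  rw [abs_mul]
  exact mul_le_mul_of_nonneg_left (hM y σ hσ) (abs_nonneg a)

lemma rpow {q : ℝ} (hq : 0 ≤ q) (h : IsBoundedSource T g) :
    IsBoundedSource T fun y σ => g y σ ^ q := by
  obtain ⟨M, hM⟩ := h.bounded
  exact ⟨h.measurable.pow_const q, M ^ q, fun y σ hσ =>
    (Real.abs_rpow_le_abs_rpow _ _).trans (Real.rpow_le_rpow (abs_nonneg _) (hM y σ hσ) hq)⟩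

lemma mono {T' : ℝ} (hT : T' ≤ T) (h : IsBoundedSource T g) : IsBoundedSource T' g := by
  obtain ⟨M, hM⟩ := h.bounded
  have hincl : Set.Ioc 0 T' ⊆ Set.Ioc 0 T := Set.Ioc_subset_Ioc_right hT
  exact ⟨h.measurable.comp <|
    ((measurable_inclusion hincl).comp measurable_fst).prodMk measurable_snd,
    M, fun y σ hσ => hM y σ (hincl hσ)⟩

end IsBoundedSource

end BoundedSource

section Duhamel

/-- The Duhamel term `∫₀ᵗ S(t - σ)[|·|^{-γ} g(σ)] dσ`, where `S` is the heat semigroup. -/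
noncomputable def duhamel (N : ℕ) (γ : ℝ) (g : EuclideanSpace ℝ (Fin N) → ℝ → ℝ) (t : ℝ)
    (x : EuclideanSpace ℝ (Fin N)) : ℝ :=
  ∫ σ in (0 : ℝ)..t, heatFlow N (t - σ) (fun y => ‖y‖ ^ (-γ) * g y σ) x

/-- The size of the Duhamel term of the constant source `1`, up to constants. Comparing both sides
of `u = ∫₀ᵗ S(t - σ)[|·|^{-γ} u^q] dσ`, it is also the expected size of `u ^ (1 - q)`. -/
noncomputable def sourceScale {N : ℕ} (γ t : ℝ) (x : EuclideanSpace ℝ (Fin N)) : ℝ :=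
  t * (√t + ‖x‖) ^ (-γ)

variable {N : ℕ} {γ t : ℝ} {g g₁ g₂ : EuclideanSpace ℝ (Fin N) → ℝ → ℝ}

lemma sourceScale_pos (ht : 0 < t) (x : EuclideanSpace ℝ (Fin N)) : 0 < sourceScale γ t x := by
  have := Real.sqrt_pos.2 ht
  unfold sourceScale; positivity

lemma sqrt_add_rpow_neg_le {σ a : ℝ} (hγ : 0 ≤ γ) (hσ : σ ∈ Set.Ico 0 t) (ha : 0 ≤ a) :
    (√(t - σ) + a) ^ (-γ) ≤ (√t + a) ^ (-γ) * (1 - σ / t) ^ (-γ / 2) := by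
  have ht : 0 < t := hσ.1.trans_lt hσ.2
  have hratio : 0 < 1 - σ / t := sub_pos.2 ((div_lt_one ht).2 hσ.2)
  have hsqrt : √(t - σ) = √t * √(1 - σ / t) := by
    rw [← Real.sqrt_mul ht.le]; congr 1; field_simp
  have hle : √(1 - σ / t) ≤ 1 := Real.sqrt_le_one.2 (by linarith [div_nonneg hσ.1 ht.le])
  calc (√(t - σ) + a) ^ (-γ) ≤ ((√t + a) * √(1 - σ / t)) ^ (-γ) := by
        refine Real.rpow_le_rpow_of_nonpos ?_ ?_ (neg_nonpos.2 hγ)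
        · have := Real.sqrt_pos.2 ht
          have := Real.sqrt_pos.2 hratio
          positivity
        · rw [hsqrt, add_mul]
          gcongr
          exact mul_le_of_le_one_right ha hle
    _ = (√t + a) ^ (-γ) * (1 - σ / t) ^ (-γ / 2) := by
        rw [Real.mul_rpow (by positivity) (by positivity), Real.sqrt_eq_rpow (1 - σ / t),
          ← Real.rpow_mul hratio.le]
        ring_nf

lemma integral_one_sub_div_rpow {r : ℝ} (hr : -1 < r) (ht : t ≠ 0) :
    ∫ σ in (0 : ℝ)..t, (1 - σ / t) ^ r = t / (r + 1) := by
  rw [intervalIntegral.integral_comp_sub_div (fun σ => σ ^ r) ht, div_self ht, sub_self, zero_div,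
    sub_zero, integral_rpow (Or.inl hr), Real.one_rpow, Real.zero_rpow (by linarith), sub_zero,
    smul_eq_mul, mul_one_div]

lemma intervalIntegrable_one_sub_div_rpow {r : ℝ} (hr : -1 < r) (ht : t ≠ 0) :
    IntervalIntegrable (fun σ => (1 - σ / t) ^ r) volume 0 t := by
  refine intervalIntegral.intervalIntegrable_of_integral_ne_zero ?_
  rw [integral_one_sub_div_rpow hr ht]
  exact div_ne_zero ht (by linarith)

namespace IsBoundedSource

lemma integrable (hg : IsBoundedSource t g) (hγ0 : 0 ≤ γ) (hγN : γ < N) {σ : ℝ}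
    (hσ : σ ∈ Set.Ioo 0 t) (x : EuclideanSpace ℝ (Fin N)) :
    Integrable fun y => heatKernel N (t - σ) (x - y) * (‖y‖ ^ (-γ) * g y σ) := by
  obtain ⟨M, hM⟩ := hg.bounded
  have hσ' : σ ∈ Set.Ioc 0 t := Set.Ioo_subset_Ioc_self hσ
  have hmeas : Measurable fun y => g y σ :=
    hg.measurable.comp (measurable_prodMk_left (x := (⟨σ, hσ'⟩ : Set.Ioc 0 t)))
  simp_rw [← mul_assoc]
  exact (integrable_heatKernel_mul_norm_rpow_neg hγ0 hγN (sub_pos.2 hσ.2) x).mul_bdd (c := M)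
    hmeas.aestronglyMeasurable (Eventually.of_forall fun y => hM y σ hσ')

lemma aemeasurable_heatFlow (hg : IsBoundedSource t g) (x : EuclideanSpace ℝ (Fin N)) :
    AEMeasurable (fun σ => heatFlow N (t - σ) (fun y => ‖y‖ ^ (-γ) * g y σ) x)
      (volume.restrict (Set.Ioc 0 t)) := by
  refine aemeasurable_restrict_of_measurable_subtype measurableSet_Ioc
    (StronglyMeasurable.integral_prod_right' (f := fun p : Set.Ioc 0 t × EuclideanSpace ℝ (Fin N) =>
      heatKernel N (t - p.1) (x - p.2) * (‖p.2‖ ^ (-γ) * g p.2 p.1)) ?_).measurable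
  refine (Measurable.mul ?_ (Measurable.mul (by fun_prop) hg.measurable)).stronglyMeasurable
  unfold heatKernel
  fun_prop

lemma intervalIntegrable (hg : IsBoundedSource t g) (hγ0 : 0 ≤ γ) (hγN : γ < N) (hγ2 : γ < 2)
    (ht : 0 < t) (x : EuclideanSpace ℝ (Fin N)) :
    IntervalIntegrable (fun σ => heatFlow N (t - σ) (fun y => ‖y‖ ^ (-γ) * g y σ) x)
      volume 0 t := by
  obtain ⟨C, hC0, hC⟩ := exists_heatFlow_norm_rpow_neg_le (N := N) hγ0 hγN
  obtain ⟨M, hM⟩ := hg.bounded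
  have hM0 : 0 ≤ M := (abs_nonneg _).trans (hM 0 t ⟨ht, le_rfl⟩)
  have hdom := (intervalIntegrable_one_sub_div_rpow (r := -γ / 2) (by linarith) ht.ne').const_mul
    (M * (C * (√t + ‖x‖) ^ (-γ)))
  have hmeas := hg.aemeasurable_heatFlow (γ := γ) x
  rw [intervalIntegrable_iff_integrableOn_Ioo_of_le ht.le] at hdom ⊢
  refine hdom.mono' (hmeas.mono_set Set.Ioo_subset_Ioc_self).aestronglyMeasurable <|
    (ae_restrict_iff' measurableSet_Ioo).2 (Eventually.of_forall fun σ hσ => ?_)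
  have hts : 0 < t - σ := sub_pos.2 hσ.2
  calc |heatFlow N (t - σ) (fun y => ‖y‖ ^ (-γ) * g y σ) x|
      ≤ M * heatFlow N (t - σ) (fun y => ‖y‖ ^ (-γ)) x :=
        abs_heatFlow_norm_rpow_neg_mul_le hγ0 hγN hts (fun y => hM y σ ⟨hσ.1, hσ.2.le⟩) x
    _ ≤ M * (C * (√(t - σ) + ‖x‖) ^ (-γ)) := by gcongr; exact hC _ hts x
    _ ≤ M * (C * ((√t + ‖x‖) ^ (-γ) * (1 - σ / t) ^ (-γ / 2))) := by
        gcongr; exact sqrt_add_rpow_neg_le hγ0 ⟨hσ.1.le, hσ.2⟩ (norm_nonneg x)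
    _ = _ := by ring

end IsBoundedSource

lemma duhamel_const_mul (a : ℝ) (g : EuclideanSpace ℝ (Fin N) → ℝ → ℝ)
    (x : EuclideanSpace ℝ (Fin N)) :
    duhamel N γ (fun y σ => a * g y σ) t x = a * duhamel N γ g t x := by
  simp only [duhamel, mul_left_comm _ a, heatFlow_const_mul, intervalIntegral.integral_const_mul]

lemma duhamel_add (h₁ : IsBoundedSource t g₁) (h₂ : IsBoundedSource t g₂) (hγ0 : 0 ≤ γ)
    (hγN : γ < N) (hγ2 : γ < 2) (ht : 0 < t) (x : EuclideanSpace ℝ (Fin N)) :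
    duhamel N γ (fun y σ => g₁ y σ + g₂ y σ) t x = duhamel N γ g₁ t x + duhamel N γ g₂ t x := by
  rw [duhamel, duhamel, duhamel, ← intervalIntegral.integral_add
    (h₁.intervalIntegrable hγ0 hγN hγ2 ht x) (h₂.intervalIntegrable hγ0 hγN hγ2 ht x)]
  refine intervalIntegral.integral_congr_Ioo_of_le ht.le fun σ hσ => ?_
  simp only [heatFlow, mul_add]
  exact integral_add (h₁.integrable hγ0 hγN hσ x) (h₂.integrable hγ0 hγN hσ x)

lemma duhamel_mono (h₁ : IsBoundedSource t g₁) (h₂ : IsBoundedSource t g₂) (hγ0 : 0 ≤ γ)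
    (hγN : γ < N) (hγ2 : γ < 2) (ht : 0 < t) (h : ∀ y, ∀ σ ∈ Set.Ioo 0 t, g₁ y σ ≤ g₂ y σ)
    (x : EuclideanSpace ℝ (Fin N)) : duhamel N γ g₁ t x ≤ duhamel N γ g₂ t x := by
  refine intervalIntegral.integral_mono_on_of_le_Ioo ht.le
    (h₁.intervalIntegrable hγ0 hγN hγ2 ht x) (h₂.intervalIntegrable hγ0 hγN hγ2 ht x)
    fun σ hσ => ?_
  refine heatFlow_mono (sub_nonneg.2 hσ.2.le) (h₁.integrable hγ0 hγN hσ x)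
    (h₂.integrable hγ0 hγN hσ x) (Eventually.of_forall fun y => ?_)
  exact mul_le_mul_of_nonneg_left (h y σ hσ) (by positivity)

lemma duhamel_nonneg (ht : 0 ≤ t) (hg : ∀ y, ∀ σ ∈ Set.Ioc 0 t, 0 ≤ g y σ)
    (x : EuclideanSpace ℝ (Fin N)) : 0 ≤ duhamel N γ g t x := by
  rw [duhamel, intervalIntegral.integral_of_le ht]
  refine setIntegral_nonneg measurableSet_Ioc fun σ hσ =>
    heatFlow_nonneg (sub_nonneg.2 hσ.2) (Eventually.of_forall fun y => ?_)
  exact mul_nonneg (by positivity) (hg y σ hσ)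

lemma exists_duhamel_one_le (hγ0 : 0 ≤ γ) (hγN : γ < N) (hγ2 : γ < 2) :
    ∃ C, 0 < C ∧ ∀ t, 0 < t → ∀ x : EuclideanSpace ℝ (Fin N),
      duhamel N γ (fun _ _ => 1) t x ≤ C * sourceScale γ t x := by
  obtain ⟨C, hC0, hC⟩ := exists_heatFlow_norm_rpow_neg_le (N := N) hγ0 hγN
  refine ⟨C / (-γ / 2 + 1), div_pos hC0 (by linarith), fun t ht x => ?_⟩
  calc duhamel N γ (fun _ _ => 1) t x
      ≤ ∫ σ in (0 : ℝ)..t, C * (√t + ‖x‖) ^ (-γ) * (1 - σ / t) ^ (-γ / 2) := by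
        refine intervalIntegral.integral_mono_on_of_le_Ioo ht.le
          ((IsBoundedSource.const t 1).intervalIntegrable hγ0 hγN hγ2 ht x)
          ((intervalIntegrable_one_sub_div_rpow (by linarith) ht.ne').const_mul _) fun σ hσ => ?_
        simp only [mul_one]
        rw [mul_assoc]
        refine (hC _ (sub_pos.2 hσ.2) x).trans ?_
        gcongr
        exact sqrt_add_rpow_neg_le hγ0 ⟨hσ.1.le, hσ.2⟩ (norm_nonneg x)
    _ = C / (-γ / 2 + 1) * sourceScale γ t x := by
        rw [intervalIntegral.integral_const_mul,
          integral_one_sub_div_rpow (by linarith) ht.ne', sourceScale]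
        ring

lemma mul_sourceScale_le_duhamel (hg : IsBoundedSource t g) (hγ0 : 0 ≤ γ) (hγN : γ < N)
    (hγ2 : γ < 2) (ht : 0 < t) (hg0 : ∀ y, ∀ σ ∈ Set.Ioc 0 t, 0 ≤ g y σ) {r m : ℝ}
    (hr : r ∈ Set.Icc 0 1) (hm : 0 ≤ m) {x : EuclideanSpace ℝ (Fin N)}
    (hmg : ∀ σ ∈ Set.Ioo (r * t) t, ∀ y, ‖y - x‖ ≤ √(t - σ) → m ≤ g y σ) :
    heatBallMass N * (1 - r) * m * sourceScale γ t x ≤ duhamel N γ g t x := by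
  have : NeZero N := ⟨by rintro rfl; exact absurd hγN (by simpa using hγ0)⟩
  have hrt : r * t ∈ Set.Icc 0 t :=
    ⟨mul_nonneg hr.1 ht.le, mul_le_of_le_one_left ht.le hr.2⟩
  have hint := hg.intervalIntegrable hγ0 hγN hγ2 ht x
  have hweight0 (σ : ℝ) (hσ : σ ∈ Set.Ioc 0 t) (y : EuclideanSpace ℝ (Fin N)) :
      0 ≤ ‖y‖ ^ (-γ) * g y σ := mul_nonneg (by positivity) (hg0 y σ hσ)
  have hflow (σ : ℝ) (hσ : σ ∈ Set.Ioo (r * t) t) :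
      heatBallMass N * ((√t + ‖x‖) ^ (-γ) * m) ≤
        heatFlow N (t - σ) (fun y => ‖y‖ ^ (-γ) * g y σ) x := by
    have hσ' : σ ∈ Set.Ioo 0 t := ⟨hrt.1.trans_lt hσ.1, hσ.2⟩
    refine heatBallMass_mul_le_heatFlow (sub_pos.2 hσ.2) (hg.integrable hγ0 hγN hσ' x)
      (Eventually.of_forall (hweight0 σ ⟨hσ'.1, hσ'.2.le⟩)) (by positivity) ?_
    filter_upwards [Measure.ae_ne volume 0] with y hy0 hyx
    have hy : ‖y‖ ≤ √t + ‖x‖ := by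
      have := Real.sqrt_le_sqrt (sub_le_self t hσ'.1.le)
      linarith [norm_sub_norm_le y x]
    exact mul_le_mul
      (Real.rpow_le_rpow_of_nonpos (norm_pos_iff.2 hy0) hy (neg_nonpos.2 hγ0))
      (hmg σ hσ y hyx) hm (by positivity)
  calc heatBallMass N * (1 - r) * m * sourceScale γ t x
      = ∫ _ in (r * t)..t, heatBallMass N * ((√t + ‖x‖) ^ (-γ) * m) := by
        rw [intervalIntegral.integral_const, smul_eq_mul, sourceScale]; ring
    _ ≤ ∫ σ in (r * t)..t, heatFlow N (t - σ) (fun y => ‖y‖ ^ (-γ) * g y σ) x :=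
        intervalIntegral.integral_mono_on_of_le_Ioo hrt.2 intervalIntegrable_const
          (hint.mono_set (by
            rw [Set.uIcc_of_le hrt.2, Set.uIcc_of_le ht.le]
            exact Set.Icc_subset_Icc_left hrt.1)) hflow
    _ ≤ duhamel N γ g t x := by
        refine intervalIntegral.integral_mono_interval hrt.1 hrt.2 le_rfl
          ((ae_restrict_iff' measurableSet_Ioc).2 (Eventually.of_forall fun σ hσ => ?_)) hint
        exact heatFlow_nonneg (sub_nonneg.2 hσ.2) (Eventually.of_forall (hweight0 σ hσ))

end Duhamel

section Iteration

variable {q : ℝ}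

lemma iterate_mul_rpow_smul {a μ : ℝ} (hq : q < 1) (ha : 0 < a) (hμ : 0 ≤ μ) (n : ℕ) :
    (fun l => a * l ^ q)^[n] (a ^ (1 - q)⁻¹ * μ) = a ^ (1 - q)⁻¹ * μ ^ q ^ n := by
  have hfix : a * (a ^ (1 - q)⁻¹) ^ q = a ^ (1 - q)⁻¹ := by
    rw [← Real.rpow_mul ha.le]
    nth_rw 1 [← Real.rpow_one a]
    rw [← Real.rpow_add ha]
    congr 1
    field_simp [(sub_pos.2 hq).ne']
    ring
  induction n with
  | zero => simp
  | succ n ih =>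
    rw [Function.iterate_succ_apply', ih, Real.mul_rpow (by positivity) (by positivity),
      ← Real.rpow_mul hμ, ← mul_assoc, hfix, ← pow_succ]

lemma tendsto_iterate_mul_rpow {a l : ℝ} (hq0 : 0 ≤ q) (hq1 : q < 1) (ha : 0 < a) (hl : 0 < l) :
    Tendsto (fun n => (fun l => a * l ^ q)^[n] l) atTop (nhds (a ^ (1 - q)⁻¹)) := by
  have hfix : 0 < a ^ (1 - q)⁻¹ := by positivity
  have hμ : 0 < l / a ^ (1 - q)⁻¹ := by positivity
  have hpow := tendsto_pow_atTop_nhds_zero_of_lt_one hq0 hq1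
  have hlim := ((Real.continuousAt_const_rpow hμ.ne').tendsto.comp hpow).const_mul (a ^ (1 - q)⁻¹)
  rw [Real.rpow_zero, mul_one] at hlim
  refine hlim.congr fun n => ?_
  rw [Function.comp_apply, ← iterate_mul_rpow_smul hq1 ha hμ.le, mul_div_cancel₀ _ hfix.ne']

end Iteration

section Profile

/-- The right-hand side of the integral formulation of `u_t - Δu = |x|^{-γ} u^q`, `u(0) = u₀`. -/
noncomputable def mildMap (N : ℕ) (γ q : ℝ) (u₀ : EuclideanSpace ℝ (Fin N) → ℝ)
    (u : EuclideanSpace ℝ (Fin N) → ℝ → ℝ) (t : ℝ) (x : EuclideanSpace ℝ (Fin N)) : ℝ :=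
  heatFlow N t u₀ x + duhamel N γ (fun y σ => u y σ ^ q) t x

/-- Bounded non-negative mild supersolutions of `u_t - Δu = |x|^{-γ} u^q` on `(0, T]` with initial
value `u₀`. -/
structure IsMildSupersolution {N : ℕ} (γ q T : ℝ) (u₀ : EuclideanSpace ℝ (Fin N) → ℝ)
    (u : EuclideanSpace ℝ (Fin N) → ℝ → ℝ) : Prop where
  isBoundedSource : IsBoundedSource T u
  nonneg : ∀ t ∈ Set.Ioc 0 T, ∀ x, 0 ≤ u x t
  mildMap_le : ∀ t ∈ Set.Ioc 0 T, ∀ x, mildMap N γ q u₀ u t x ≤ u x t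

/-- Bounded non-negative mild subsolutions of `v_t - Δv = |x|^{-γ} v^q` on `(0, T]` with initial
value `v₀`. -/
structure IsMildSubsolution {N : ℕ} (γ q T : ℝ) (v₀ : EuclideanSpace ℝ (Fin N) → ℝ)
    (v : EuclideanSpace ℝ (Fin N) → ℝ → ℝ) : Prop where
  isBoundedSource : IsBoundedSource T v
  nonneg : ∀ t ∈ Set.Ioc 0 T, ∀ x, 0 ≤ v x t
  le_mildMap : ∀ t ∈ Set.Ioc 0 T, ∀ x, v x t ≤ mildMap N γ q v₀ v t x

/-- The pairs `(c, k)` for which the profile `c * sourceScale γ t x ^ p`, damped by a Gaussian of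
rate `k`, is a minorant of `u` on `(0, T]`. Adding `R ^ 2` to `‖x‖ ^ 2` leaves room for initial
values supported away from the origin. -/
def gaussianMinorants {N : ℕ} (γ p T R : ℝ) (u : EuclideanSpace ℝ (Fin N) → ℝ → ℝ) : Set (ℝ × ℝ) :=
  {ck | ck ∈ Set.Ici 0 ×ˢ Set.Icc 0 1 ∧ ∀ t ∈ Set.Ioc 0 T, ∀ x,
    ck.1 * sourceScale γ t x ^ p * Real.exp (-(ck.2 * ((‖x‖ ^ 2 + R ^ 2) / t))) ≤ u x t}

variable {N : ℕ} {γ p q r t σ T R : ℝ} {u₀ : EuclideanSpace ℝ (Fin N) → ℝ}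
  {u : EuclideanSpace ℝ (Fin N) → ℝ → ℝ} {x y : EuclideanSpace ℝ (Fin N)}

lemma isClosed_gaussianMinorants (γ p T R : ℝ) (u : EuclideanSpace ℝ (Fin N) → ℝ → ℝ) :
    IsClosed (gaussianMinorants γ p T R u) := by
  simp only [gaussianMinorants, Set.ofPred_and, Set.ofPred_forall, Set.ofPred_mem_eq]
  refine (isClosed_Ici.prod isClosed_Icc).inter <| isClosed_biInter fun t _ =>
    isClosed_iInter fun x => isClosed_le (by fun_prop) continuous_const

lemma sourceScale_le_rpow (hγ : 0 ≤ γ) (ht : 0 < t) (x : EuclideanSpace ℝ (Fin N)) :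
    sourceScale γ t x ≤ t ^ (1 - γ / 2) := by
  have hs := Real.sqrt_pos.2 ht
  calc sourceScale γ t x ≤ t * √t ^ (-γ) := by
        unfold sourceScale
        gcongr t * ?_
        exact Real.rpow_le_rpow_of_nonpos hs (le_add_of_nonneg_right (norm_nonneg x))
          (neg_nonpos.2 hγ)
    _ = t ^ (1 - γ / 2) := by
        rw [Real.sqrt_eq_rpow, ← Real.rpow_mul ht.le, sub_eq_add_neg, Real.rpow_add ht,
          Real.rpow_one]
        ring_nf

lemma mul_sourceScale_le_sourceScale (hγ : 0 ≤ γ) (hr : 0 ≤ r) (ht : 0 < t)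
    (hσ : σ ∈ Set.Ioo (r * t) t) (hy : ‖y - x‖ ≤ √(t - σ)) :
    r * 2 ^ (-γ) * sourceScale γ t x ≤ sourceScale γ σ y := by
  have hσ0 : 0 < σ := (mul_nonneg hr ht.le).trans_lt hσ.1
  have := Real.sqrt_pos.2 hσ0
  have hdist : √σ + ‖y‖ ≤ 2 * (√t + ‖x‖) := by
    have h₁ := Real.sqrt_le_sqrt hσ.2.le
    have h₂ := Real.sqrt_le_sqrt (sub_le_self t hσ0.le)
    linarith [norm_sub_norm_le y x, norm_nonneg x]
  calc r * 2 ^ (-γ) * sourceScale γ t x = r * t * (2 * (√t + ‖x‖)) ^ (-γ) := by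
        rw [Real.mul_rpow (by norm_num) (by positivity), sourceScale]; ring
    _ ≤ σ * (√σ + ‖y‖) ^ (-γ) :=
        mul_le_mul hσ.1.le (Real.rpow_le_rpow_of_nonpos (by positivity) hdist (neg_nonpos.2 hγ))
          (by positivity) hσ0.le

lemma sq_mul_norm_sq_add_div_le {ρ : ℝ} (hr : r ∈ Set.Ioo 0 1) (hρ : 0 ≤ ρ) (ht : 0 < t)
    (hσ : σ ∈ Set.Ioo (r * t) t) (hy : ‖y - x‖ ≤ √(t - σ)) :
    r ^ 2 * ((‖y‖ ^ 2 + ρ) / σ) ≤ (‖x‖ ^ 2 + ρ) / t + r := by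
  obtain ⟨hr0, hr1⟩ := hr
  have hr1' : 0 < 1 - r := sub_pos.2 hr1
  have : 0 < r * t := mul_pos hr0 ht
  have hdiff : ‖y - x‖ ^ 2 ≤ (1 - r) * t := by
    calc ‖y - x‖ ^ 2 ≤ √(t - σ) ^ 2 := by gcongr
      _ = t - σ := Real.sq_sqrt (sub_nonneg.2 hσ.2.le)
      _ ≤ (1 - r) * t := by linarith [hσ.1]
  -- Young's inequality, with the weights `r` and `1 - r`
  have hyoung : (‖x‖ + ‖y - x‖) ^ 2 ≤ ‖x‖ ^ 2 / r + ‖y - x‖ ^ 2 / (1 - r) := by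
    rw [div_add_div _ _ hr0.ne' hr1'.ne', le_div_iff₀ (by positivity)]
    nlinarith [sq_nonneg ((1 - r) * ‖x‖ - r * ‖y - x‖)]
  have hnorm : ‖y‖ ^ 2 ≤ ‖x‖ ^ 2 / r + t := by
    have htri : ‖y‖ ≤ ‖x‖ + ‖y - x‖ := by linarith [norm_sub_norm_le y x]
    calc ‖y‖ ^ 2 ≤ (‖x‖ + ‖y - x‖) ^ 2 := by gcongr
      _ ≤ ‖x‖ ^ 2 / r + ‖y - x‖ ^ 2 / (1 - r) := hyoung
      _ ≤ ‖x‖ ^ 2 / r + t := by gcongr; rw [div_le_iff₀' hr1']; exact hdiff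
  calc r ^ 2 * ((‖y‖ ^ 2 + ρ) / σ) ≤ r ^ 2 * ((‖x‖ ^ 2 / r + t + ρ / r) / (r * t)) := by
        gcongr
        · exact le_div_self hρ hr0 hr1.le
        · exact hσ.1.le
    _ = (‖x‖ ^ 2 + ρ) / t + r := by field_simp; ring

lemma exists_setIntegral_closedBall_pos {f : EuclideanSpace ℝ (Fin N) → ℝ} (hf : MemLp f ⊤)
    (hf0 : 0 ≤ᵐ[volume] f) (hne : ¬ f =ᵐ[volume] 0) :
    ∃ R, 0 < ∫ y in Metric.closedBall 0 R, f y := by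
  by_contra! h
  refine hne ?_
  rw [← Measure.restrict_univ (μ := volume), ← Metric.iUnion_closedBall_nat 0,
    ae_eq_restrict_iUnion_iff]
  intro n
  have hint : IntegrableOn f (Metric.closedBall 0 n) :=
    (hf.locallyIntegrable le_top).integrableOn_isCompact (isCompact_closedBall 0 _)
  rw [← integral_eq_zero_iff_of_nonneg_ae (ae_restrict_of_ae hf0) hint]
  exact (h n).antisymm (setIntegral_nonneg_of_ae hf0)

lemma gaussian_mul_setIntegral_le_heatFlow {f : EuclideanSpace ℝ (Fin N) → ℝ} (hf : MemLp f ⊤)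
    (hf0 : 0 ≤ᵐ[volume] f) (ht : 0 < t) (R : ℝ) (x : EuclideanSpace ℝ (Fin N)) :
    (4 * π * t) ^ (-(N : ℝ) / 2) * Real.exp (-(1 / 2 * ((‖x‖ ^ 2 + R ^ 2) / t))) *
      ∫ y in Metric.closedBall 0 R, f y ≤ heatFlow N t f x := by
  have hint := integrable_heatKernel_mul ht hf x
  rw [← integral_const_mul]
  calc ∫ y in Metric.closedBall 0 R,
        (4 * π * t) ^ (-(N : ℝ) / 2) * Real.exp (-(1 / 2 * ((‖x‖ ^ 2 + R ^ 2) / t))) * f y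
      ≤ ∫ y in Metric.closedBall 0 R, heatKernel N t (x - y) * f y := by
        refine setIntegral_mono_on_ae
          (((hf.locallyIntegrable le_top).integrableOn_isCompact
            (isCompact_closedBall 0 R)).const_mul _) hint.integrableOn measurableSet_closedBall ?_
        filter_upwards [hf0] with y hy hyR
        refine mul_le_mul_of_nonneg_right ?_ hy
        rw [mem_closedBall_zero_iff] at hyR
        have hsq : ‖x - y‖ ^ 2 ≤ 2 * (‖x‖ ^ 2 + R ^ 2) := by
          nlinarith [parallelogram_law_with_norm ℝ x y, sq_nonneg ‖x + y‖, norm_nonneg y]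
        unfold heatKernel
        gcongr
        rw [neg_div, neg_le_neg_iff, div_le_iff₀ (by positivity)]
        calc ‖x - y‖ ^ 2 ≤ 2 * (‖x‖ ^ 2 + R ^ 2) := hsq
          _ = _ := by field_simp; ring
    _ ≤ heatFlow N t f x := by
        refine setIntegral_le_integral hint ?_
        filter_upwards [hf0] with y hy using mul_nonneg (heatKernel_nonneg ht.le _) hy

lemma le_rpow_of_mem_gaussianMinorants (hγ : 0 ≤ γ) (hp : 0 ≤ p) (hq : 0 ≤ q)
    (hr : r ∈ Set.Ioo 0 1) (hqr : q ≤ r ^ 3) {c k : ℝ} (hck : (c, k) ∈ gaussianMinorants γ p T R u)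
    (ht : t ∈ Set.Ioc 0 T) (hσ : σ ∈ Set.Ioo (r * t) t) (hy : ‖y - x‖ ≤ √(t - σ)) :
    c ^ q * (r * 2 ^ (-γ) * sourceScale γ t x) ^ (q * p) *
      Real.exp (-(r * k * ((‖x‖ ^ 2 + R ^ 2) / t)) - 1) ≤ u y σ ^ q := by
  obtain ⟨⟨hc, hk0, hk1⟩, hmin⟩ := hck
  have hc : 0 ≤ c := hc
  have hk0 : 0 ≤ k := hk0
  have hσ0 : 0 < σ := (mul_nonneg hr.1.le ht.1.le).trans_lt hσ.1
  have hscale := mul_sourceScale_le_sourceScale hγ hr.1.le ht.1 hσ hy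
  have hscale0 := mul_nonneg (mul_nonneg hr.1.le (by positivity : (0 : ℝ) ≤ 2 ^ (-γ)))
    (sourceScale_pos (γ := γ) ht.1 x).le
  have hσpos := (sourceScale_pos (γ := γ) hσ0 y).le
  have hgauss : k * ((‖y‖ ^ 2 + R ^ 2) / σ) * q ≤ r * k * ((‖x‖ ^ 2 + R ^ 2) / t) + 1 := by
    calc k * ((‖y‖ ^ 2 + R ^ 2) / σ) * q ≤ k * ((‖y‖ ^ 2 + R ^ 2) / σ) * r ^ 3 := by gcongr
      _ = r * k * (r ^ 2 * ((‖y‖ ^ 2 + R ^ 2) / σ)) := by ring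
      _ ≤ r * k * ((‖x‖ ^ 2 + R ^ 2) / t + r) := by
          have := hr.1
          gcongr
          exact sq_mul_norm_sq_add_div_le hr (sq_nonneg R) ht.1 hσ hy
      _ ≤ r * k * ((‖x‖ ^ 2 + R ^ 2) / t) + 1 := by
          rw [mul_add]
          gcongr
          exact mul_le_one₀ (mul_le_one₀ hr.2.le hk0 hk1) hr.1.le hr.2.le
  calc c ^ q * (r * 2 ^ (-γ) * sourceScale γ t x) ^ (q * p) *
        Real.exp (-(r * k * ((‖x‖ ^ 2 + R ^ 2) / t)) - 1)
      ≤ c ^ q * sourceScale γ σ y ^ (q * p) *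
          Real.exp (-(k * ((‖y‖ ^ 2 + R ^ 2) / σ) * q)) := by
        gcongr
        linarith
    _ = (c * sourceScale γ σ y ^ p * Real.exp (-(k * ((‖y‖ ^ 2 + R ^ 2) / σ)))) ^ q := by
        rw [Real.mul_rpow (by positivity) (by positivity), Real.mul_rpow hc (by positivity),
          ← Real.rpow_mul hσpos, ← Real.exp_mul, mul_comm p q, neg_mul]
    _ ≤ u y σ ^ q := by
        gcongr
        exact hmin σ ⟨hσ0, hσ.2.le.trans ht.2⟩ y

namespace IsMildSupersolution

lemma heatFlow_le (hu : IsMildSupersolution γ q T u₀ u) (ht : t ∈ Set.Ioc 0 T)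
    (x : EuclideanSpace ℝ (Fin N)) : heatFlow N t u₀ x ≤ u x t :=
  (le_add_of_nonneg_right (duhamel_nonneg ht.1.le (fun y σ hσ =>
    Real.rpow_nonneg (hu.nonneg σ ⟨hσ.1, hσ.2.trans ht.2⟩ y) q) x)).trans (hu.mildMap_le t ht x)

lemma duhamel_le (hu : IsMildSupersolution γ q T u₀ u) (hu₀ : 0 ≤ᵐ[volume] u₀)
    (ht : t ∈ Set.Ioc 0 T) (x : EuclideanSpace ℝ (Fin N)) :
    duhamel N γ (fun y σ => u y σ ^ q) t x ≤ u x t :=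
  (le_add_of_nonneg_left (heatFlow_nonneg ht.1.le hu₀)).trans (hu.mildMap_le t ht x)

lemma exists_mem_gaussianMinorants (hu : IsMildSupersolution γ q T u₀ u) (hγ0 : 0 ≤ γ)
    (hγ2 : γ ≤ 2) (hp : 0 ≤ p) (hT : 0 < T) (hu₀ : MemLp u₀ ⊤) (hu₀0 : 0 ≤ᵐ[volume] u₀)
    (hne : ¬ u₀ =ᵐ[volume] 0) :
    ∃ R c, 0 < c ∧ (c, 1 / 2) ∈ gaussianMinorants γ p T R u := by
  obtain ⟨R, hR⟩ := exists_setIntegral_closedBall_pos hu₀ hu₀0 hne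
  let mass := ∫ y in Metric.closedBall 0 R, u₀ y
  have hA : 0 < (T ^ (1 - γ / 2)) ^ p := by positivity
  have hc : 0 < (4 * π * T) ^ (-(N : ℝ) / 2) * mass / (T ^ (1 - γ / 2)) ^ p := by positivity
  refine ⟨R, _, hc, ⟨hc.le, by norm_num, by norm_num⟩, fun t ht x => ?_⟩
  have hD : sourceScale γ t x ^ p ≤ (T ^ (1 - γ / 2)) ^ p := by
    refine Real.rpow_le_rpow (sourceScale_pos ht.1 x).le ?_ hp
    exact (sourceScale_le_rpow hγ0 ht.1 x).trans
      (Real.rpow_le_rpow ht.1.le ht.2 (by linarith))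
  have hprefactor : (4 * π * T) ^ (-(N : ℝ) / 2) ≤ (4 * π * t) ^ (-(N : ℝ) / 2) := by
    have ht0 := ht.1
    refine Real.rpow_le_rpow_of_nonpos (by positivity) ?_ ?_
    · gcongr
      exact ht.2
    · rw [neg_div]
      exact neg_nonpos.2 (by positivity)
  calc (4 * π * T) ^ (-(N : ℝ) / 2) * mass / (T ^ (1 - γ / 2)) ^ p * sourceScale γ t x ^ p *
        Real.exp (-(1 / 2 * ((‖x‖ ^ 2 + R ^ 2) / t)))
      ≤ (4 * π * T) ^ (-(N : ℝ) / 2) * mass / (T ^ (1 - γ / 2)) ^ p * (T ^ (1 - γ / 2)) ^ p *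
        Real.exp (-(1 / 2 * ((‖x‖ ^ 2 + R ^ 2) / t))) := by gcongr
    _ = (4 * π * T) ^ (-(N : ℝ) / 2) * mass *
        Real.exp (-(1 / 2 * ((‖x‖ ^ 2 + R ^ 2) / t))) := by rw [div_mul_cancel₀ _ hA.ne']
    _ ≤ (4 * π * t) ^ (-(N : ℝ) / 2) * mass *
        Real.exp (-(1 / 2 * ((‖x‖ ^ 2 + R ^ 2) / t))) := by gcongr
    _ = (4 * π * t) ^ (-(N : ℝ) / 2) * Real.exp (-(1 / 2 * ((‖x‖ ^ 2 + R ^ 2) / t))) * mass := by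
        ring
    _ ≤ heatFlow N t u₀ x := gaussian_mul_setIntegral_le_heatFlow hu₀ hu₀0 ht.1 R x
    _ ≤ u x t := hu.heatFlow_le ht x

lemma exists_mapsTo_gaussianMinorants (hγ0 : 0 ≤ γ) (hγN : γ < N) (hγ2 : γ < 2) (hq0 : 0 ≤ q)
    (hr : r ∈ Set.Ioo 0 1) (hqr : q ≤ r ^ 3) :
    ∃ κ, 0 < κ ∧ ∀ (T R : ℝ) (u₀ : EuclideanSpace ℝ (Fin N) → ℝ)
      (u : EuclideanSpace ℝ (Fin N) → ℝ → ℝ), IsMildSupersolution γ q T u₀ u →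
      0 ≤ᵐ[volume] u₀ → Set.MapsTo (Prod.map (fun c => κ * c ^ q) fun k => r * k)
        (gaussianMinorants γ (1 - q)⁻¹ T R u) (gaussianMinorants γ (1 - q)⁻¹ T R u) := by
  have hq1 : 0 < 1 - q := sub_pos.2 (hqr.trans_lt (pow_lt_one₀ hr.1.le hr.2 three_ne_zero))
  obtain ⟨hr0, hr1⟩ : 0 < r ∧ 0 < 1 - r := ⟨hr.1, sub_pos.2 hr.2⟩
  have hmass := heatBallMass_pos N
  refine ⟨heatBallMass N * (1 - r) * (r * 2 ^ (-γ)) ^ (q * (1 - q)⁻¹) * Real.exp (-1),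
    by positivity, ?_⟩
  rintro T R u₀ u hu hu₀ ⟨c, k⟩ hck
  have hc : 0 ≤ c := hck.1.1
  have hk : k ∈ Set.Icc 0 1 := hck.1.2
  refine ⟨⟨mul_nonneg (by positivity) (Real.rpow_nonneg hc q), mul_nonneg hr0.le hk.1,
    mul_le_one₀ hr.2.le hk.1 hk.2⟩, fun t ht x => ?_⟩
  have hD := sourceScale_pos (γ := γ) ht.1 x
  have hexponent : (1 - q)⁻¹ = q * (1 - q)⁻¹ + 1 := by field_simp; ring
  have hduhamel := mul_sourceScale_le_duhamel ((hu.isBoundedSource.rpow hq0).mono ht.2) hγ0 hγN hγ2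
    ht.1 (fun y σ hσ => Real.rpow_nonneg (hu.nonneg σ ⟨hσ.1, hσ.2.trans ht.2⟩ y) q)
    ⟨hr0.le, hr.2.le⟩ (by positivity) fun σ hσ y hy =>
      le_rpow_of_mem_gaussianMinorants hγ0 (inv_nonneg.2 hq1.le) hq0 hr hqr hck ht hσ hy
  refine le_trans (le_of_eq ?_) (hduhamel.trans (hu.duhamel_le hu₀ ht x))
  dsimp only [Prod.map_apply]
  nth_rw 2 [hexponent]
  rw [Real.rpow_add_one hD.ne', Real.mul_rpow (by positivity) hD.le, sub_eq_add_neg (-_) 1,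
    Real.exp_add]
  ring

lemma exists_mul_sourceScale_rpow_le (hγ0 : 0 ≤ γ) (hγN : γ < N) (hγ2 : γ < 2) (hq0 : 0 < q)
    (hq1 : q < 1) :
    ∃ κ, 0 < κ ∧ ∀ (T : ℝ) (u₀ : EuclideanSpace ℝ (Fin N) → ℝ)
      (u : EuclideanSpace ℝ (Fin N) → ℝ → ℝ), IsMildSupersolution γ q T u₀ u → MemLp u₀ ⊤ →
      0 ≤ᵐ[volume] u₀ → ¬ u₀ =ᵐ[volume] 0 →
      ∀ t ∈ Set.Ioc 0 T, ∀ x, κ * sourceScale γ t x ^ (1 - q)⁻¹ ≤ u x t := by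
  have hr : q ^ (3 : ℝ)⁻¹ ∈ Set.Ioo 0 1 :=
    ⟨by positivity, Real.rpow_lt_one hq0.le hq1 (by norm_num)⟩
  have hqr : q = (q ^ (3 : ℝ)⁻¹) ^ 3 := by
    rw [← Real.rpow_mul_natCast hq0.le]; norm_num
  obtain ⟨κ, hκ, hmaps⟩ := exists_mapsTo_gaussianMinorants hγ0 hγN hγ2 hq0.le hr hqr.le
  refine ⟨κ ^ (1 - q)⁻¹, by positivity, fun T u₀ u hu hu₀ hu₀0 hne t ht x => ?_⟩
  obtain ⟨R, c, hc, hmem⟩ := hu.exists_mem_gaussianMinorants (p := (1 - q)⁻¹) hγ0 hγ2.le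
    (inv_nonneg.2 (sub_nonneg.2 hq1.le)) (ht.1.trans_le ht.2) hu₀ hu₀0 hne
  have hlim : Tendsto
      (fun n => (Prod.map (fun c => κ * c ^ q) (fun k => q ^ (3 : ℝ)⁻¹ * k))^[n] (c, 1 / 2))
      atTop (nhds (κ ^ (1 - q)⁻¹, 0)) := by
    have hrate := (tendsto_pow_atTop_nhds_zero_of_lt_one hr.1.le hr.2).mul_const (1 / 2)
    rw [zero_mul] at hrate
    simpa only [Prod.map_iterate, Prod.map_apply, mul_left_iterate] using
      (tendsto_iterate_mul_rpow hq0.le hq1 hκ hc).prodMk_nhds hrate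
  have hmem_lim := (isClosed_gaussianMinorants γ _ T R u).mem_of_tendsto hlim
    (Eventually.of_forall fun n => (hmaps T R u₀ u hu hu₀0).iterate n hmem)
  simpa using hmem_lim.2 t ht x

end IsMildSupersolution

end Profile

section Comparison

/-- The constants `l ≥ 1` for which `v ≤ l * (u + ε)` on `(0, T]`. The shift by `ε` provides such a
constant for every bounded `v`, although `u` may decay faster than `v` a priori. -/
def ratioBounds {N : ℕ} (T ε : ℝ) (u v : EuclideanSpace ℝ (Fin N) → ℝ → ℝ) : Set ℝ :=
  {l | 1 ≤ l ∧ ∀ t ∈ Set.Ioc 0 T, ∀ x, v x t ≤ l * (u x t + ε)}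

variable {N : ℕ} {γ q t T ε : ℝ} {u₀ v₀ : EuclideanSpace ℝ (Fin N) → ℝ}
  {u v : EuclideanSpace ℝ (Fin N) → ℝ → ℝ}

lemma isClosed_ratioBounds (T ε : ℝ) (u v : EuclideanSpace ℝ (Fin N) → ℝ → ℝ) :
    IsClosed (ratioBounds T ε u v) := by
  simp only [ratioBounds, Set.ofPred_and, Set.ofPred_forall]
  exact isClosed_Ici.inter <| isClosed_biInter fun t _ => isClosed_iInter fun x =>
    isClosed_le continuous_const (by fun_prop)

lemma ratioBounds_nonempty (hu : ∀ t ∈ Set.Ioc 0 T, ∀ x, 0 ≤ u x t) (hv : IsBoundedSource T v)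
    (hε : 0 < ε) : (ratioBounds T ε u v).Nonempty := by
  obtain ⟨K, hK⟩ := hv.bounded
  refine ⟨max 1 (K / ε), le_max_left _ _, fun t ht x => ?_⟩
  calc v x t ≤ K := (le_abs_self _).trans (hK x t ht)
    _ = K / ε * ε := (div_mul_cancel₀ K hε.ne').symm
    _ ≤ max 1 (K / ε) * (u x t + ε) :=
        mul_le_mul (le_max_right _ _) (le_add_of_nonneg_left (hu t ht x)) hε.le (by positivity)

lemma rpow_mem_ratioBounds_of_mapsTo {a : ℝ} (hq0 : 0 ≤ q) (hq1 : q < 1) (ha : 0 < a)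
    (hmaps : Set.MapsTo (fun l => a * l ^ q) (ratioBounds T ε u v) (ratioBounds T ε u v))
    (hne : (ratioBounds T ε u v).Nonempty) : a ^ (1 - q)⁻¹ ∈ ratioBounds T ε u v := by
  obtain ⟨l, hl⟩ := hne
  exact (isClosed_ratioBounds T ε u v).mem_of_tendsto
    (tendsto_iterate_mul_rpow hq0 hq1 ha (one_pos.trans_le hl.1))
    (Eventually.of_forall fun n => hmaps.iterate n hl)

lemma mem_ratioBounds_zero_of_forall_pos {L : ℝ} (h : ∀ ε, 0 < ε → L ∈ ratioBounds T ε u v) :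
    L ∈ ratioBounds T 0 u v := by
  have hL : 1 ≤ L := (h 1 one_pos).1
  have hL0 : 0 < L := one_pos.trans_le hL
  refine ⟨hL, fun t ht x => le_of_forall_pos_le_add fun δ hδ => ?_⟩
  have := (h (δ / L) (by positivity)).2 t ht x
  rwa [mul_add, mul_div_cancel₀ _ hL0.ne', ← add_zero (u x t)] at this

lemma duhamel_rpow_le_of_mem_ratioBounds (hγ0 : 0 ≤ γ) (hγN : γ < N) (hγ2 : γ < 2) (hq0 : 0 ≤ q)
    (hq1 : q ≤ 1) (hu : IsBoundedSource T u) (hv : IsBoundedSource T v)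
    (hu0 : ∀ t ∈ Set.Ioc 0 T, ∀ x, 0 ≤ u x t) (hv0 : ∀ t ∈ Set.Ioc 0 T, ∀ x, 0 ≤ v x t)
    (hε : 0 ≤ ε) {l : ℝ} (hl : l ∈ ratioBounds T ε u v) (ht : t ∈ Set.Ioc 0 T)
    (x : EuclideanSpace ℝ (Fin N)) :
    duhamel N γ (fun y σ => v y σ ^ q) t x ≤
      l ^ q * (duhamel N γ (fun y σ => u y σ ^ q) t x +
        ε ^ q * duhamel N γ (fun _ _ => 1) t x) := by
  have hl0 : 0 ≤ l := zero_le_one.trans hl.1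
  have huq := (hu.rpow hq0).mono ht.2
  have hεq := (IsBoundedSource.const (N := N) t 1).const_mul (ε ^ q)
  rw [← duhamel_const_mul (ε ^ q), ← duhamel_add huq hεq hγ0 hγN hγ2 ht.1, ← duhamel_const_mul]
  refine duhamel_mono ((hv.rpow hq0).mono ht.2) ((huq.add hεq).const_mul _) hγ0 hγN hγ2 ht.1
    (fun y σ hσ => ?_) x
  have hσT : σ ∈ Set.Ioc 0 T := ⟨hσ.1, hσ.2.le.trans ht.2⟩
  have huσ := hu0 σ hσT y
  calc v y σ ^ q ≤ (l * (u y σ + ε)) ^ q :=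
        Real.rpow_le_rpow (hv0 σ hσT y) (hl.2 σ hσT y) hq0
    _ = l ^ q * (u y σ + ε) ^ q := Real.mul_rpow hl0 (by positivity)
    _ ≤ l ^ q * (u y σ ^ q + ε ^ q * 1) := by
        rw [mul_one]
        gcongr
        exact Real.rpow_add_le_add_rpow huσ hε hq0 hq1

lemma le_rpow_mul_add_of_mem_ratioBounds (hγ0 : 0 ≤ γ) (hγN : γ < N) (hγ2 : γ < 2) (hq0 : 0 ≤ q)
    (hq1 : q ≤ 1) (hu₀ : MemLp u₀ ⊤) (hv₀ : MemLp v₀ ⊤) (hu₀0 : 0 ≤ᵐ[volume] u₀)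
    (hle : v₀ ≤ᵐ[volume] u₀) (hu : IsMildSupersolution γ q T u₀ u)
    (hv : IsMildSubsolution γ q T v₀ v) (hε : 0 ≤ ε) {l : ℝ} (hl : l ∈ ratioBounds T ε u v)
    (ht : t ∈ Set.Ioc 0 T) (x : EuclideanSpace ℝ (Fin N)) :
    v x t ≤ l ^ q * (u x t + ε ^ q * duhamel N γ (fun _ _ => 1) t x) := by
  have hl0 : 0 ≤ l := zero_le_one.trans hl.1
  have hheat : heatFlow N t v₀ x ≤ l ^ q * heatFlow N t u₀ x :=
    (heatFlow_mono ht.1.le (integrable_heatKernel_mul ht.1 hv₀ x)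
      (integrable_heatKernel_mul ht.1 hu₀ x) hle).trans
      (le_mul_of_one_le_left (heatFlow_nonneg ht.1.le hu₀0) (Real.one_le_rpow hl.1 hq0))
  have hduhamel := duhamel_rpow_le_of_mem_ratioBounds hγ0 hγN hγ2 hq0 hq1 hu.isBoundedSource
    hv.isBoundedSource hu.nonneg hv.nonneg hε hl ht x
  calc v x t ≤ heatFlow N t v₀ x + duhamel N γ (fun y σ => v y σ ^ q) t x := hv.le_mildMap t ht x
    _ ≤ l ^ q * heatFlow N t u₀ x + l ^ q * (duhamel N γ (fun y σ => u y σ ^ q) t x +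
          ε ^ q * duhamel N γ (fun _ _ => 1) t x) := add_le_add hheat hduhamel
    _ = l ^ q * (mildMap N γ q u₀ u t x + ε ^ q * duhamel N γ (fun _ _ => 1) t x) := by
        rw [mildMap]; ring
    _ ≤ l ^ q * (u x t + ε ^ q * duhamel N γ (fun _ _ => 1) t x) := by
        gcongr; exact hu.mildMap_le t ht x

lemma IsMildSupersolution.exists_duhamel_one_le_mul_rpow (hu : IsMildSupersolution γ q T u₀ u)
    (hγ0 : 0 ≤ γ) (hγN : γ < N) (hγ2 : γ < 2) (hq0 : 0 < q) (hq1 : q < 1) (hu₀ : MemLp u₀ ⊤)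
    (hu₀0 : 0 ≤ᵐ[volume] u₀) (hne : ¬ u₀ =ᵐ[volume] 0) :
    ∃ B, 0 < B ∧ ∀ t ∈ Set.Ioc 0 T, ∀ x,
      duhamel N γ (fun _ _ => 1) t x ≤ B * u x t ^ (1 - q) := by
  obtain ⟨κ, hκ, hprofile⟩ := exists_mul_sourceScale_rpow_le hγ0 hγN hγ2 hq0 hq1
  obtain ⟨C, hC, hduhamel⟩ := exists_duhamel_one_le (N := N) hγ0 hγN hγ2
  have hq1' : 0 < 1 - q := sub_pos.2 hq1
  refine ⟨C / κ ^ (1 - q), by positivity, fun t ht x => ?_⟩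
  have hD := (sourceScale_pos (γ := γ) ht.1 x).le
  calc duhamel N γ (fun _ _ => 1) t x ≤ C * sourceScale γ t x := hduhamel t ht.1 x
    _ = C / κ ^ (1 - q) * (κ * sourceScale γ t x ^ (1 - q)⁻¹) ^ (1 - q) := by
        rw [Real.mul_rpow hκ.le (by positivity), Real.rpow_inv_rpow hD hq1'.ne']
        field_simp
    _ ≤ C / κ ^ (1 - q) * u x t ^ (1 - q) := by
        gcongr
        exact hprofile T u₀ u hu hu₀ hu₀0 hne t ht x

lemma rpow_mul_rpow_one_sub_le_add {a b : ℝ} (ha : 0 ≤ a) (hb : 0 < b) (hq0 : 0 ≤ q)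
    (hq1 : q ≤ 1) : b ^ q * a ^ (1 - q) ≤ a + b := by
  calc b ^ q * a ^ (1 - q) ≤ (a + b) ^ q * (a + b) ^ (1 - q) := by
        gcongr <;> linarith
    _ = a + b := by rw [← Real.rpow_add (by positivity), add_sub_cancel, Real.rpow_one]

lemma mapsTo_ratioBounds_of_duhamel_one_le (hγ0 : 0 ≤ γ) (hγN : γ < N) (hγ2 : γ < 2)
    (hq0 : 0 ≤ q) (hq1 : q ≤ 1) (hu₀ : MemLp u₀ ⊤) (hv₀ : MemLp v₀ ⊤) (hu₀0 : 0 ≤ᵐ[volume] u₀)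
    (hle : v₀ ≤ᵐ[volume] u₀) (hu : IsMildSupersolution γ q T u₀ u)
    (hv : IsMildSubsolution γ q T v₀ v) {B : ℝ} (hB : 0 ≤ B)
    (hduhamel : ∀ t ∈ Set.Ioc 0 T, ∀ x, duhamel N γ (fun _ _ => 1) t x ≤ B * u x t ^ (1 - q))
    (hε : 0 < ε) :
    Set.MapsTo (fun l => (1 + B) * l ^ q) (ratioBounds T ε u v) (ratioBounds T ε u v) := by
  refine fun l hl => ⟨one_le_mul_of_one_le_of_one_le (le_add_of_nonneg_right hB)
    (Real.one_le_rpow hl.1 hq0), fun t ht x => ?_⟩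
  have hl0 : 0 ≤ l := zero_le_one.trans hl.1
  have hshift : ε ^ q * duhamel N γ (fun _ _ => 1) t x ≤ B * (u x t + ε) := by
    calc ε ^ q * duhamel N γ (fun _ _ => 1) t x ≤ ε ^ q * (B * u x t ^ (1 - q)) := by
          gcongr; exact hduhamel t ht x
      _ = B * (ε ^ q * u x t ^ (1 - q)) := mul_left_comm _ _ _
      _ ≤ B * (u x t + ε) := by
          gcongr; exact rpow_mul_rpow_one_sub_le_add (hu.nonneg t ht x) hε hq0 hq1
  calc v x t ≤ l ^ q * (u x t + ε ^ q * duhamel N γ (fun _ _ => 1) t x) :=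
        le_rpow_mul_add_of_mem_ratioBounds hγ0 hγN hγ2 hq0 hq1 hu₀ hv₀ hu₀0 hle hu hv hε.le hl ht x
    _ ≤ l ^ q * ((u x t + ε) + B * (u x t + ε)) := by gcongr; exact le_add_of_nonneg_right hε.le
    _ = (1 + B) * l ^ q * (u x t + ε) := by ring

theorem comparison_small_gamma_general (hγ0 : 0 ≤ γ) (hγN : γ < N) (hγ2 : γ < 2) (hq0 : 0 < q)
    (hq1 : q < 1) (hu₀ : MemLp u₀ ⊤) (hv₀ : MemLp v₀ ⊤) (hu₀0 : 0 ≤ᵐ[volume] u₀)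
    (hle : v₀ ≤ᵐ[volume] u₀) (hne : ¬ u₀ =ᵐ[volume] 0) (hu : IsMildSupersolution γ q T u₀ u)
    (hv : IsMildSubsolution γ q T v₀ v) (ht : t ∈ Set.Ioc 0 T) (x : EuclideanSpace ℝ (Fin N)) :
    v x t ≤ u x t := by
  obtain ⟨B, hB, hduhamel⟩ :=
    hu.exists_duhamel_one_le_mul_rpow hγ0 hγN hγ2 hq0 hq1 hu₀ hu₀0 hne
  have hbound : (1 + B) ^ (1 - q)⁻¹ ∈ ratioBounds T 0 u v :=
    mem_ratioBounds_zero_of_forall_pos fun ε hε =>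
      rpow_mem_ratioBounds_of_mapsTo hq0.le hq1 (by positivity)
        (mapsTo_ratioBounds_of_duhamel_one_le hγ0 hγN hγ2 hq0.le hq1.le hu₀ hv₀ hu₀0 hle hu hv
          hB.le hduhamel hε)
        (ratioBounds_nonempty hu.nonneg hv.isBoundedSource hε)
  have hmaps :
      Set.MapsTo (fun l => 1 * l ^ q) (ratioBounds T 0 u v) (ratioBounds T 0 u v) := by
    refine fun l hl => ⟨by simpa using Real.one_le_rpow hl.1 hq0.le, fun t ht x => ?_⟩
    simpa [Real.zero_rpow hq0.ne'] using le_rpow_mul_add_of_mem_ratioBounds hγ0 hγN hγ2 hq0.le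
      hq1.le hu₀ hv₀ hu₀0 hle hu hv le_rfl hl ht x
  have hone := rpow_mem_ratioBounds_of_mapsTo hq0.le hq1 one_pos hmaps ⟨_, hbound⟩
  simpa using hone.2 t ht x

end Comparison

section Admissible

lemma memLp_top_of_tendsto_cocompact {X : Type*} [TopologicalSpace X] [MeasurableSpace X]
    [OpensMeasurableSpace X] {f : X → ℝ} (hf : Continuous f)
    (hlim : Tendsto f (cocompact X) (nhds 0)) (μ : Measure X) : MemLp f ⊤ μ := by
  let F : ZeroAtInftyContinuousMap X ℝ := ⟨⟨f, hf⟩, hlim⟩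
  exact memLp_top_of_bound hf.measurable.aestronglyMeasurable ‖F.toBCF‖
    (Eventually.of_forall F.toBCF.norm_coe_le_norm)

variable {N : ℕ} {γ q T : ℝ} {u₀ : EuclideanSpace ℝ (Fin N) → ℝ}
  {w : EuclideanSpace ℝ (Fin N) → ℝ → ℝ}

namespace IsAdmissible

lemma exists_continuous_curve (hw : IsAdmissible N w) (T : ℝ) :
    ∃ W : Set.Icc 0 T → BoundedContinuousFunction (EuclideanSpace ℝ (Fin N)) ℝ,
      Continuous W ∧ ∀ t x, W t x = w x t := by
  obtain ⟨-, hcont, hlim, hunif⟩ := hw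
  let W (t : Set.Icc 0 T) : ZeroAtInftyContinuousMap (EuclideanSpace ℝ (Fin N)) ℝ :=
    ⟨⟨fun x => w x t, hcont t t.2.1⟩, hlim t t.2.1⟩
  refine ⟨fun t => (W t).toBCF, Metric.continuous_iff'.2 fun t₀ ε hε => ?_, fun _ _ => rfl⟩
  obtain ⟨δ, hδ, h⟩ := hunif t₀ t₀.2.1 (ε / 2) (half_pos hε)
  filter_upwards [Metric.ball_mem_nhds t₀ hδ] with t ht
  exact ((BoundedContinuousFunction.dist_le (half_pos hε).le).2 (h t t.2.1 ht)).trans_lt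
    (half_lt_self hε)

lemma isBoundedSource (hw : IsAdmissible N w) (T : ℝ) : IsBoundedSource T w := by
  obtain ⟨W, hW, hWw⟩ := hw.exists_continuous_curve T
  obtain ⟨M, hM⟩ := (isCompact_range hW).isBounded.exists_norm_le
  refine ⟨?_, M, fun x t ht => ?_⟩
  · have hcont : Continuous fun p : Set.Ioc 0 T × EuclideanSpace ℝ (Fin N) =>
        W (Set.inclusion Set.Ioc_subset_Icc_self p.1) p.2 := by fun_prop
    simpa only [hWw] using hcont.measurable
  · rw [← hWw ⟨t, Set.Ioc_subset_Icc_self ht⟩]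
    exact ((W _).norm_coe_le_norm x).trans (hM _ (Set.mem_range_self _))

lemma isMildSupersolution (hw : IsAdmissible N w)
    (h : ∀ t ∈ Set.Ioc 0 T, ∀ x, mildMap N γ q u₀ w t x ≤ w x t) :
    IsMildSupersolution γ q T u₀ w :=
  ⟨hw.isBoundedSource T, fun t ht x => hw.1 x t ht.1.le, h⟩

lemma isMildSubsolution (hw : IsAdmissible N w)
    (h : ∀ t ∈ Set.Ioc 0 T, ∀ x, w x t ≤ mildMap N γ q u₀ w t x) :
    IsMildSubsolution γ q T u₀ w :=
  ⟨hw.isBoundedSource T, fun t ht x => hw.1 x t ht.1.le, h⟩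

end IsAdmissible

end Admissible

/-- Comparison principle for super- and sub-solutions of the integral
formulation of `u_t - Δu = |x|^{-γ} u^q`, `0 < q < 1`, for `γ > 0` small:
if `u₀ ≥ v₀ ≥ 0`, `u₀ ≢ 0`, `u` is a super-solution with data `u₀` and `v`
is a sub-solution with data `v₀`, then `u ≥ v` everywhere. -/
theorem comparison_small_gamma (N : ℕ) (hN : 1 ≤ N) (q : ℝ)
    (hq0 : 0 < q) (hq1 : q < 1) :
    ∃ γstar : ℝ, 0 < γstar ∧
      ∀ γ : ℝ, 0 < γ → γ < γstar →
        ∀ u₀ v₀ : EuclideanSpace ℝ (Fin N) → ℝ,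
          Continuous u₀ → Continuous v₀ →
          Tendsto u₀ (cocompact (EuclideanSpace ℝ (Fin N))) (nhds 0) →
          Tendsto v₀ (cocompact (EuclideanSpace ℝ (Fin N))) (nhds 0) →
          (∀ x, 0 ≤ v₀ x) → (∀ x, v₀ x ≤ u₀ x) → u₀ ≠ 0 →
          ∀ u v : EuclideanSpace ℝ (Fin N) → ℝ → ℝ,
            IsAdmissible N u → IsAdmissible N v →
            -- super-solution inequality for u (at t = 0 it reads u(x,0) ≥ u₀(x))
            (∀ x, u₀ x ≤ u x 0) →
            (∀ t, 0 < t → ∀ x,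
              (∫ y, heatKernel N t (x - y) * u₀ y) +
                (∫ σ in (0 : ℝ)..t, ∫ y,
                  heatKernel N (t - σ) (x - y) * ‖y‖ ^ (-γ) * u y σ ^ q)
                ≤ u x t) →
            -- sub-solution inequality for v (at t = 0 it reads v(x,0) ≤ v₀(x))
            (∀ x, v x 0 ≤ v₀ x) →
            (∀ t, 0 < t → ∀ x,
              v x t ≤ (∫ y, heatKernel N t (x - y) * v₀ y) +
                ∫ σ in (0 : ℝ)..t, ∫ y,
                  heatKernel N (t - σ) (x - y) * ‖y‖ ^ (-γ) * v y σ ^ q) →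
            ∀ x t, 0 ≤ t → v x t ≤ u x t := by
  refine ⟨1, one_pos, fun γ hγ0 hγ1 u₀ v₀ hu₀ hv₀ hu₀lim hv₀lim hv₀0 hle hne u v hu hv hu_init
    hsuper hv_init hsub x t ht => ?_⟩
  rcases ht.eq_or_lt with rfl | ht
  · exact (hv_init x).trans ((hle x).trans (hu_init x))
  have hγN : γ < N := hγ1.trans_le (by exact_mod_cast hN)
  refine comparison_small_gamma_general hγ0.le hγN (by linarith) hq0 hq1
    (memLp_top_of_tendsto_cocompact hu₀ hu₀lim volume)
    (memLp_top_of_tendsto_cocompact hv₀ hv₀lim volume)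
    (Eventually.of_forall fun y => (hv₀0 y).trans (hle y)) (Eventually.of_forall hle)
    (fun h => hne (hu₀.ae_eq_iff_eq volume continuous_const |>.1 h))
    (hu.isMildSupersolution fun s hs y => ?_) (hv.isMildSubsolution fun s hs y => ?_) ⟨ht, le_rfl⟩ x
  · simpa only [mildMap, heatFlow, duhamel, mul_assoc] using hsuper s hs.1 y
  · simpa only [mildMap, heatFlow, duhamel, mul_assoc] using hsub s hs.1 y
end

section
/- Let N ≥ 1, t > 0, and let f : [0,∞) → ℝ be a C¹ function with f'(r) ≤ 0 for all r > 0, such that the function y ↦ exp(−|x−y|²/(4t)) f(|y|) is integrable on ℝ^N for every x ∈ ℝ^N. Define F(x) = (4πt)^{−N/2} ∫_{ℝ^N} exp(−|x−y|²/(4t)) f(|y|) dy. Then F attains its maximum at x = 0; that is, F(x) ≤ F(0) for all x ∈ ℝ^N. -/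
open MeasureTheory Real

/-! For radially antitone `g` and `h` the differences `g ‖y‖ - g ‖x - y‖` and `h ‖y‖ - h ‖x - y‖`
never have opposite signs. Integrating their product, and using that the involution `y ↦ x - y`
preserves the measure, gives `2 ∫ g ‖y‖ * h ‖y‖ - 2 ∫ g ‖x - y‖ * h ‖y‖ ≥ 0`. Here `g` is the
Gaussian profile and `h = f`. -/

theorem integral_comp_mul_le_of_monovary {α : Type*} [MeasurableSpace α] {μ : Measure α}
    {T : α → α} (hT : MeasurePreserving T μ μ) (hinv : Function.Involutive T) {g h : α → ℝ}
    (hgh : Monovary g h) (hTint : Integrable (fun y => g (T y) * h y) μ)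
    (hint : Integrable (fun y => g y * h y) μ) :
    ∫ y, g (T y) * h y ∂μ ≤ ∫ y, g y * h y ∂μ := by
  have integral_comp (u : α → ℝ) : ∫ y, u (T y) ∂μ = ∫ y, u y ∂μ :=
    hT.integral_comp (MeasurableEquiv.ofInvolutive T hinv hT.measurable).measurableEmbedding u
  have hTint' : Integrable (fun y => g y * h (T y)) μ := by
    simpa only [Function.comp_def, hinv _] using hT.integrable_comp_of_integrable hTint
  have hint' : Integrable (fun y => g (T y) * h (T y)) μ := hT.integrable_comp_of_integrable hint
  have cross_eq : ∫ y, g y * h (T y) ∂μ = ∫ y, g (T y) * h y ∂μ := by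
    simpa only [hinv _] using integral_comp fun y => g (T y) * h y
  have diag_eq : ∫ y, g (T y) * h (T y) ∂μ = ∫ y, g y * h y ∂μ :=
    integral_comp fun y => g y * h y
  have rearrangement : ∫ y, (g y * h (T y) + g (T y) * h y) ∂μ
      ≤ ∫ y, (g y * h y + g (T y) * h (T y)) ∂μ :=
    integral_mono (hTint'.add hTint) (hint.add hint') fun y =>
      monovary_iff_mul_rearrangement.1 hgh y (T y)
  rw [integral_add hTint' hTint, integral_add hint hint', cross_eq, diag_eq] at rearrangement
  linarith

theorem monovary_comp_norm_of_antitoneOn {E : Type*} [SeminormedAddGroup E] {g h : ℝ → ℝ}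
    (hg : AntitoneOn g (Set.Ici 0)) (hh : AntitoneOn h (Set.Ici 0)) :
    Monovary (fun y : E => g ‖y‖) (fun y : E => h ‖y‖) := fun y z hlt =>
  hg.monovaryOn hh (norm_nonneg y) (norm_nonneg z) hlt

theorem antitoneOn_exp_neg_sq_div {c : ℝ} (hc : 0 ≤ c) :
    AntitoneOn (fun r : ℝ => exp (-r ^ 2 / c)) (Set.Ici 0) := by
  intro a ha b _ hab
  have ha : 0 ≤ a := ha
  dsimp only
  gcongr

theorem antitoneOn_of_contDiffOn_of_deriv_nonpos {D : Set ℝ} (hD : Convex ℝ D)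
    {n : WithTop ℕ∞} (hn : n ≠ 0) {f : ℝ → ℝ} (hf : ContDiffOn ℝ n f D)
    (hf' : ∀ r ∈ interior D, deriv f r ≤ 0) : AntitoneOn f D :=
  antitoneOn_of_deriv_nonpos hD hf.continuousOn ((hf.differentiableOn hn).mono interior_subset) hf'

section RadialConvolution

variable {E : Type*} [SeminormedAddCommGroup E] [MeasurableSpace E] [MeasurableAdd E]
  [MeasurableNeg E] {μ : Measure E} [μ.IsAddLeftInvariant] [μ.IsNegInvariant]

theorem integral_norm_sub_mul_norm_le_of_antitoneOn {g h : ℝ → ℝ}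
    (hg : AntitoneOn g (Set.Ici 0)) (hh : AntitoneOn h (Set.Ici 0)) (x : E)
    (hx : Integrable (fun y => g ‖x - y‖ * h ‖y‖) μ)
    (h0 : Integrable (fun y => g ‖y‖ * h ‖y‖) μ) :
    ∫ y, g ‖x - y‖ * h ‖y‖ ∂μ ≤ ∫ y, g ‖y‖ * h ‖y‖ ∂μ :=
  integral_comp_mul_le_of_monovary (Measure.measurePreserving_sub_left μ x) (sub_sub_cancel x)
    (monovary_comp_norm_of_antitoneOn hg hh) hx h0

theorem heat_convolution_radial_max_at_zero_general (d : ℝ) {t : ℝ} (ht : 0 < t) {f : ℝ → ℝ}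
    (hf : AntitoneOn f (Set.Ici 0)) (x : E)
    (hx : Integrable (fun y => exp (-‖x - y‖ ^ 2 / (4 * t)) * f ‖y‖) μ)
    (h0 : Integrable (fun y => exp (-‖0 - y‖ ^ 2 / (4 * t)) * f ‖y‖) μ) :
    (4 * π * t) ^ (-d / 2) * ∫ y, exp (-‖x - y‖ ^ 2 / (4 * t)) * f ‖y‖ ∂μ
      ≤ (4 * π * t) ^ (-d / 2) * ∫ y, exp (-‖0 - y‖ ^ 2 / (4 * t)) * f ‖y‖ ∂μ := by
  simp only [zero_sub, norm_neg] at h0 ⊢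
  have gaussian_antitone := antitoneOn_exp_neg_sq_div (c := 4 * t) (by positivity)
  exact mul_le_mul_of_nonneg_left
    (integral_norm_sub_mul_norm_le_of_antitoneOn gaussian_antitone hf x hx h0) (by positivity)

end RadialConvolution

/-- If `f : [0,∞) → ℝ` is `C¹` with `f'(r) ≤ 0` for `r > 0`, then the
convolution of the heat kernel with the radial function `y ↦ f(|y|)`
attains its maximum at the origin. -/
theorem heat_convolution_radial_max_at_zero (N : ℕ) (hN : 1 ≤ N)
    (t : ℝ) (ht : 0 < t) (f : ℝ → ℝ)
    (hf : ContDiffOn ℝ 1 f (Set.Ici 0))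
    (hf' : ∀ r : ℝ, 0 < r → deriv f r ≤ 0)
    (hint : ∀ x : EuclideanSpace ℝ (Fin N),
      Integrable (fun y : EuclideanSpace ℝ (Fin N) =>
        Real.exp (-‖x - y‖ ^ 2 / (4 * t)) * f ‖y‖)) :
    ∀ x : EuclideanSpace ℝ (Fin N),
      (4 * π * t) ^ (-(N : ℝ) / 2) *
          ∫ y : EuclideanSpace ℝ (Fin N), Real.exp (-‖x - y‖ ^ 2 / (4 * t)) * f ‖y‖
        ≤ (4 * π * t) ^ (-(N : ℝ) / 2) *
            ∫ y : EuclideanSpace ℝ (Fin N), Real.exp (-‖(0 : EuclideanSpace ℝ (Fin N)) - y‖ ^ 2 / (4 * t)) * f ‖y‖ := fun x =>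
  heat_convolution_radial_max_at_zero_general N ht
    (antitoneOn_of_contDiffOn_of_deriv_nonpos (convex_Ici 0) one_ne_zero hf (by simpa using hf'))
    x (hint x) (hint 0)
end

section
/- Let T > 0, 0 ≤ α < 1, A ≥ 0 and M > 0. Let ψ : [0,T] → [0,∞) be a measurable essentially bounded function satisfying ψ(t) ≤ A + M ∫₀ᵗ (t−τ)^{−α} ψ(τ) dτ for almost every t ∈ [0,T]. Then there exists a constant C, depending only on M, α and T, such that ψ(t) ≤ A·C for almost every t ∈ [0,T]. In particular, if A = 0 then ψ = 0 almost everywhere on [0,T]. -/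
open MeasureTheory Real

/-!
Write `φ(t) = exp(-l t) ψ(t)` and `κ(s) = exp(-l s) k(s)`, where `k(s) = M s^(-α)`. Multiplying the
inequality by `exp(-l t)` turns it into one of the same shape,
`φ(t) ≤ A + ∫₀ᵗ κ(t - τ) φ(τ) dτ`. By dominated convergence `q = ∫₀ᵀ κ` is less than `1` once `l` is
large, and then the essential supremum `K` of the positive part of `φ` satisfies `K ≤ A + q K`, that
is `K ≤ A / (1 - q)`.
-/

open Set Filter Topology
open scoped ENNReal

lemma tendsto_integral_exp_neg_mul_smul_atTop {E : Type*} [NormedAddCommGroup E]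
    [NormedSpace ℝ E] {μ : Measure ℝ} {f : ℝ → E} (hμ : ∀ᵐ s ∂μ, 0 < s) (hf : Integrable f μ) :
    Tendsto (fun l : ℝ => ∫ s, exp (-(l * s)) • f s ∂μ) atTop (𝓝 0) := by
  rw [← integral_zero ℝ E (μ := μ)]
  refine tendsto_integral_filter_of_dominated_convergence (fun s => ‖f s‖)
    (.of_forall fun l => ?_) ?_ hf.norm ?_
  · exact (by fun_prop : Continuous fun s => exp (-(l * s))).aestronglyMeasurable.smul hf.1
  · filter_upwards [eventually_ge_atTop 0] with l hl
    filter_upwards [hμ] with s hs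
    rw [norm_smul, norm_of_nonneg (exp_nonneg _)]
    exact mul_le_of_le_one_left (norm_nonneg _)
      (exp_le_one_iff.2 (neg_nonpos.2 (mul_nonneg hl hs.le)))
  · filter_upwards [hμ] with s hs
    have hexp : Tendsto (fun l : ℝ => exp (-(l * s))) atTop (𝓝 0) :=
      tendsto_exp_neg_atTop_nhds_zero.comp (tendsto_id.atTop_mul_const hs)
    simpa only [zero_smul] using hexp.smul_const (f s)

lemma memLp_top_restrict_of_continuousOn {X E : Type*} [TopologicalSpace X] [MeasurableSpace X]
    [OpensMeasurableSpace X] [TopologicalSpace.PseudoMetrizableSpace X] [NormedAddCommGroup E]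
    {μ : Measure X} {S : Set X} {f : X → E} (hS : IsCompact S) (hS_meas : MeasurableSet S)
    (hf : ContinuousOn f S) : MemLp f ∞ (μ.restrict S) := by
  obtain ⟨B, hB⟩ := hS.exists_bound_of_continuousOn hf
  exact memLp_top_of_bound (hf.aestronglyMeasurable_of_isCompact hS hS_meas) B
    ((ae_restrict_mem hS_meas).mono hB)

lemma ae_le_div_one_sub_of_forall_ae_le {Ω : Type*} [MeasurableSpace Ω] {μ : Measure Ω}
    {f : Ω → ℝ} {A B q : ℝ} (hA : 0 ≤ A) (hq0 : 0 ≤ q) (hq1 : q < 1) (hB : ∀ᵐ x ∂μ, f x ≤ B)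
    (himprove : ∀ K, 0 ≤ K → (∀ᵐ x ∂μ, f x ≤ K) → ∀ᵐ x ∂μ, f x ≤ A + q * K) :
    ∀ᵐ x ∂μ, f x ≤ A / (1 - q) := by
  rcases eq_or_ne μ 0 with rfl | hμ
  · simp
  have : (ae μ).NeBot := ae_neBot.2 hμ
  let K := essSup (fun x => max (f x) 0) μ
  have hmaxK : ∀ᵐ x ∂μ, max (f x) 0 ≤ K :=
    ae_le_essSup (isBoundedUnder_of_eventually_le (hB.mono fun _ hx => max_le_max_right 0 hx))
  have hfK : ∀ᵐ x ∂μ, f x ≤ K := hmaxK.mono fun _ => (le_max_left _ _).trans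
  have hK : 0 ≤ K := let ⟨_, hx⟩ := hmaxK.exists; (le_max_right _ _).trans hx
  have hK_le : K ≤ A + q * K :=
    essSup_le_of_ae_le _
      ((himprove K hK hfK).mono fun _ hx => max_le hx (add_nonneg hA (mul_nonneg hq0 hK)))
      (isCoboundedUnder_le_of_le _ fun _ => le_max_right _ _)
  have hK_div : K ≤ A / (1 - q) := (le_div_iff₀ (sub_pos.2 hq1)).2 (by linarith)
  exact hfK.mono fun _ hx => hx.trans hK_div

section Volterra

variable {k : ℝ → ℝ}

lemma integral_comp_sub_mul_le {f : ℝ → ℝ} {t K : ℝ} (ht : 0 ≤ t)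
    (hk : IntegrableOn k (Ioo 0 t)) (hk0 : ∀ s ∈ Ioo 0 t, 0 ≤ k s)
    (hf : MemLp f ∞ (volume.restrict (Ioo 0 t)))
    (hfK : ∀ᵐ τ ∂volume.restrict (Ioo 0 t), f τ ≤ K) :
    ∫ τ in 0..t, k (t - τ) * f τ ≤ (∫ s in Ioo 0 t, k s) * K := by
  have hk_sub : IntegrableOn (fun τ => k (t - τ)) (Ioo 0 t) := by
    rw [← intervalIntegrable_iff_integrableOn_Ioo_of_le ht] at hk ⊢
    simpa only [sub_zero, sub_self] using (hk.comp_sub_left t).symm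
  have hint_sub : ∫ τ in Ioo 0 t, k (t - τ) = ∫ s in Ioo 0 t, k s := by
    simpa only [intervalIntegral.integral_of_le ht, integral_Ioc_eq_integral_Ioo, sub_zero,
      sub_self] using intervalIntegral.integral_comp_sub_left k t (a := 0) (b := t)
  rw [intervalIntegral.integral_of_le ht, integral_Ioc_eq_integral_Ioo, ← hint_sub,
    ← integral_mul_const]
  refine integral_mono_ae (hk_sub.mul_of_top_left hf) (hk_sub.mul_const K) ?_
  filter_upwards [hfK, ae_restrict_mem measurableSet_Ioo] with τ hτK hτ
  exact mul_le_mul_of_nonneg_left hτK (hk0 _ ⟨sub_pos.2 hτ.2, sub_lt_self t hτ.1⟩)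

lemma exp_neg_mul_integral_comp_sub_mul (l t : ℝ) (f : ℝ → ℝ) :
    exp (-(l * t)) * ∫ τ in 0..t, k (t - τ) * f τ =
      ∫ τ in 0..t, (exp (-(l * (t - τ))) * k (t - τ)) * (exp (-(l * τ)) * f τ) := by
  rw [← intervalIntegral.integral_const_mul]
  congr! 2
  rw [mul_mul_mul_comm, ← exp_add]
  ring_nf

lemma exp_neg_mul_le_volterra {l t A : ℝ} {f : ℝ → ℝ} (hl : 0 ≤ l) (ht : 0 ≤ t) (hA : 0 ≤ A)
    (hle : f t ≤ A + ∫ τ in 0..t, k (t - τ) * f τ) :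
    exp (-(l * t)) * f t ≤
      A + ∫ τ in 0..t, (exp (-(l * (t - τ))) * k (t - τ)) * (exp (-(l * τ)) * f τ) := by
  have hexp : exp (-(l * t)) ≤ 1 := exp_le_one_iff.2 (neg_nonpos.2 (mul_nonneg hl ht))
  rw [← exp_neg_mul_integral_comp_sub_mul]
  calc exp (-(l * t)) * f t ≤ exp (-(l * t)) * (A + ∫ τ in 0..t, k (t - τ) * f τ) := by gcongr
    _ = exp (-(l * t)) * A + exp (-(l * t)) * ∫ τ in 0..t, k (t - τ) * f τ := mul_add _ _ _
    _ ≤ A + exp (-(l * t)) * ∫ τ in 0..t, k (t - τ) * f τ := by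
      gcongr
      exact mul_le_of_le_one_left hA hexp

variable {T : ℝ}

lemma ae_le_div_one_sub_integral_of_ae_le_volterra {A : ℝ} {φ : ℝ → ℝ}
    (hk : IntegrableOn k (Ioo 0 T)) (hk0 : ∀ s ∈ Ioo 0 T, 0 ≤ k s)
    (hk1 : ∫ s in Ioo 0 T, k s < 1) (hA : 0 ≤ A)
    (hφ : MemLp φ ∞ (volume.restrict (Icc 0 T)))
    (hle : ∀ᵐ t ∂volume.restrict (Icc 0 T), φ t ≤ A + ∫ τ in 0..t, k (t - τ) * φ τ) :
    ∀ᵐ t ∂volume.restrict (Icc 0 T), φ t ≤ A / (1 - ∫ s in Ioo 0 T, k s) := by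
  have hφ_bdd := (ae_le_lpNorm_exponent_top hφ).mono fun _ => (le_abs_self _).trans
  refine ae_le_div_one_sub_of_forall_ae_le hA (setIntegral_nonneg measurableSet_Ioo hk0) hk1 hφ_bdd
    fun K hK hφK => ?_
  filter_upwards [hle, ae_restrict_mem measurableSet_Icc] with t ht htT
  have hsub_kernel : Ioo 0 t ⊆ Ioo 0 T := Ioo_subset_Ioo_right htT.2
  have hsub : Ioo 0 t ⊆ Icc 0 T := hsub_kernel.trans Ioo_subset_Icc_self
  calc φ t ≤ A + ∫ τ in 0..t, k (t - τ) * φ τ := ht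
    _ ≤ A + (∫ s in Ioo 0 t, k s) * K := by
      gcongr
      exact integral_comp_sub_mul_le htT.1 (hk.mono_set hsub_kernel)
        (fun s hs => hk0 s (hsub_kernel hs)) (hφ.mono_measure (Measure.restrict_mono_set _ hsub))
        (ae_restrict_of_ae_restrict_of_subset hsub hφK)
    _ ≤ A + (∫ s in Ioo 0 T, k s) * K := by
      gcongr
      exact (ae_restrict_mem measurableSet_Ioo).mono hk0

lemma exists_integral_exp_neg_mul_lt_one (hk : IntegrableOn k (Ioo 0 T)) :
    ∃ l : ℝ, 0 ≤ l ∧ ∫ s in Ioo 0 T, exp (-(l * s)) * k s < 1 := by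
  have hpos : ∀ᵐ s ∂volume.restrict (Ioo 0 T), 0 < s :=
    (ae_restrict_mem measurableSet_Ioo).mono fun _ hs => hs.1
  exact ((eventually_ge_atTop 0).and
    ((tendsto_integral_exp_neg_mul_smul_atTop hpos hk).eventually_lt_const one_pos)).exists

theorem singular_gronwall_general (hk : IntegrableOn k (Ioo 0 T)) (hk0 : ∀ s ∈ Ioo 0 T, 0 ≤ k s) :
    ∃ C : ℝ, 0 < C ∧ ∀ A : ℝ, 0 ≤ A → ∀ ψ : ℝ → ℝ, MemLp ψ ∞ (volume.restrict (Icc 0 T)) →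
      (∀ᵐ t ∂volume.restrict (Icc 0 T), ψ t ≤ A + ∫ τ in 0..t, k (t - τ) * ψ τ) →
      ∀ᵐ t ∂volume.restrict (Icc 0 T), ψ t ≤ A * C := by
  obtain ⟨l, hl, hq⟩ := exists_integral_exp_neg_mul_lt_one hk
  have hweight : MemLp (fun s => exp (-(l * s))) ∞ (volume.restrict (Icc 0 T)) :=
    memLp_top_restrict_of_continuousOn isCompact_Icc measurableSet_Icc (by fun_prop)
  have hkl : IntegrableOn (fun s => exp (-(l * s)) * k s) (Ioo 0 T) :=
    hk.mul_of_top_right (hweight.mono_measure (Measure.restrict_mono_set _ Ioo_subset_Icc_self))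
  set q := ∫ s in Ioo 0 T, exp (-(l * s)) * k s
  refine ⟨exp (l * T) / (1 - q), div_pos (exp_pos _) (sub_pos.2 hq), fun A hA ψ hψ hle => ?_⟩
  have hφ_le : ∀ᵐ t ∂volume.restrict (Icc 0 T), exp (-(l * t)) * ψ t ≤ A / (1 - q) := by
    refine ae_le_div_one_sub_integral_of_ae_le_volterra hkl
      (fun s hs => mul_nonneg (exp_nonneg _) (hk0 s hs)) hq hA (hψ.mul hweight) ?_
    filter_upwards [hle, ae_restrict_mem measurableSet_Icc] with t ht htT
    exact exp_neg_mul_le_volterra hl htT.1 hA ht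
  filter_upwards [hφ_le, ae_restrict_mem measurableSet_Icc] with t ht htT
  calc ψ t = exp (l * t) * (exp (-(l * t)) * ψ t) := by
        rw [← mul_assoc, ← exp_add, add_neg_cancel, exp_zero, one_mul]
    _ ≤ exp (l * t) * (A / (1 - q)) := by gcongr
    _ ≤ exp (l * T) * (A / (1 - q)) := by
        gcongr
        exact htT.2
    _ = A * (exp (l * T) / (1 - q)) := by ring

end Volterra

/-- Singular (Gronwall–Henry) Gronwall inequality: if a non-negative
essentially bounded measurable `ψ` on `[0,T]` satisfies
`ψ(t) ≤ A + M ∫₀ᵗ (t-τ)^{-α} ψ(τ) dτ` for a.e. `t ∈ [0,T]`, with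
`0 ≤ α < 1`, then `ψ(t) ≤ A·C(M,α,T)` for a.e. `t ∈ [0,T]`. The constant
`C` depends only on `M`, `α` and `T` (in particular not on `A` or `ψ`). -/
theorem singular_gronwall (T α M : ℝ) (hT : 0 < T) (hα0 : 0 ≤ α)
    (hα1 : α < 1) (hM : 0 < M) :
    ∃ C : ℝ, 0 < C ∧
      ∀ A : ℝ, 0 ≤ A →
        ∀ ψ : ℝ → ℝ,
          AEMeasurable ψ (volume.restrict (Set.Icc 0 T)) →
          (∀ t ∈ Set.Icc (0 : ℝ) T, 0 ≤ ψ t) →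
          (∃ B : ℝ, ∀ᵐ t ∂volume.restrict (Set.Icc 0 T), ψ t ≤ B) →
          (∀ᵐ t ∂volume.restrict (Set.Icc 0 T),
            ψ t ≤ A + M * ∫ τ in (0 : ℝ)..t, (t - τ) ^ (-α) * ψ τ) →
          ∀ᵐ t ∂volume.restrict (Set.Icc 0 T), ψ t ≤ A * C := by
  obtain ⟨C, hC, h⟩ := singular_gronwall_general (k := fun s => M * s ^ (-α))
    (((intervalIntegral.integrableOn_Ioo_rpow_iff hT).2 (neg_lt_neg hα1)).const_mul M)
    fun s hs => mul_nonneg hM.le (rpow_nonneg hs.1.le _)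
  exact ⟨C, hC, fun A hA ψ hψ hψ0 ⟨B, hB⟩ hle => h A hA ψ
    (memLp_of_bounded ((ae_restrict_of_forall_mem measurableSet_Icc hψ0).and hB)
      hψ.aestronglyMeasurable ∞)
    (by simpa only [mul_assoc, intervalIntegral.integral_const_mul] using hle)⟩
end
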